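/- arXiv:1103.5654 — 2 statements merged into one kernel-verified Lean document; each statement's English description precedes it below -/
import Mathlib

section
/- Let r ≥ 0 and 1 ≤ s ≤ 3 be integers and set d_3(n,r,s) = n^2 − (n−r)^2 + 1 if s = 1, n^2 − (n−r)(n−r−1) if s = 2, and n^2 − (n−r−1)^2 if s = 3. If H is a 3-partite 3-graph with each class of size n ≥ 3^7·(3r+s+1) and δ_1(H) > d_3(n,r,s), then H contains a matching of size 3r + s + 1. -/
/-- The degree of the vertex `x` in class `c` of a 3-partite 3-graph, encoded as a
finite set of functions `Fin 3 → Fin n`. -/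
def deg3 {n : ℕ} (H : Finset (Fin 3 → Fin n)) (c : Fin 3) (x : Fin n) : ℕ :=
  (H.filter (fun e => e c = x)).card

/-- The degree threshold `d₃(n,r,s)` for a matching of size `3r+s+1`. -/
def d3 (n r s : ℕ) : ℕ :=
  if s = 1 then n ^ 2 - (n - r) ^ 2 + 1
  else if s = 2 then n ^ 2 - (n - r) * (n - r - 1)
  else n ^ 2 - (n - r - 1) ^ 2

/-- Pairwise disjointness of a set of edges. -/
def IsMat {n : ℕ} (M : Finset (Fin 3 → Fin n)) : Prop :=
  ∀ e ∈ M, ∀ f ∈ M, e ≠ f → ∀ i, e i ≠ f i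

lemma fin3_cover (i j k : Fin 3) (hij : i ≠ j) (hik : i ≠ k) (hjk : j ≠ k) (l : Fin 3) :
    l = i ∨ l = j ∨ l = k := by
  revert i j k l; decide

lemma exists_others (c : Fin 3) : ∃ i j : Fin 3, c ≠ i ∧ c ≠ j ∧ i ≠ j := by
  revert c; decide

lemma prod3 (f : Fin 3 → ℕ) (i j k : Fin 3) (hij : i ≠ j) (hik : i ≠ k) (hjk : j ≠ k) :
    ∏ l, f l = f i * f j * f k := by
  rw [Fin.prod_univ_three]
  fin_cases i <;> fin_cases j <;> fin_cases k <;> first | (exact absurd rfl hij) | (exact absurd rfl hik) | (exact absurd rfl hjk) | (simp only [Fin.isValue, Fin.mk_zero, Fin.mk_one, Fin.reduceFinMk]; done) |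
    (simp only [Fin.isValue, Fin.mk_zero, Fin.mk_one, Fin.reduceFinMk]; ring)

lemma sum3 (f : Fin 3 → ℕ) (i j k : Fin 3) (hij : i ≠ j) (hik : i ≠ k) (hjk : j ≠ k) :
    ∑ l, f l = f i + f j + f k := by
  rw [Fin.sum_univ_three]
  fin_cases i <;> fin_cases j <;> fin_cases k <;> simp_all <;> ring

lemma bad_count {n : ℕ} (H : Finset (Fin 3 → Fin n)) (c i j : Fin 3) (hci : c ≠ i) (hcj : c ≠ j)
    (hij : i ≠ j) (x : Fin n) (F : Finset (Fin n)) :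
    (H.filter (fun e => e c = x ∧ e i ∈ F)).card ≤ F.card * n := by
  have h1 : H.filter (fun e => e c = x ∧ e i ∈ F) ⊆
      Fintype.piFinset (fun l => if l = c then {x} else if l = i then F else Finset.univ) := by
    intro e he
    simp only [Finset.mem_filter] at he
    rw [Fintype.mem_piFinset]
    intro l
    by_cases h : l = c
    · subst h; simp [he.2.1]
    · by_cases h' : l = i
      · subst h'; simp [h, he.2.2]
      · simp [h, h']
  refine (Finset.card_le_card h1).trans ?_
  rw [Fintype.card_piFinset, prod3 _ c i j hci hcj hij]
  simp [hci.symm, hcj.symm, hij.symm]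

lemma card_avoid {n : ℕ} (c i j : Fin 3) (hci : c ≠ i) (hcj : c ≠ j)
    (hij : i ≠ j) (x : Fin n) (U : Fin 3 → Finset (Fin n)) :
    (Finset.univ.filter (fun e : Fin 3 → Fin n => e c = x ∧ e i ∈ U i ∧ e j ∈ U j)).card
      = (U i).card * (U j).card := by
  have h1 : Finset.univ.filter (fun e : Fin 3 → Fin n => e c = x ∧ e i ∈ U i ∧ e j ∈ U j) =
      Fintype.piFinset (fun l => if l = c then {x} else U l) := by
    ext e
    simp only [Finset.mem_filter, Finset.mem_univ, true_and]
    rw [Fintype.mem_piFinset]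
    constructor
    · rintro ⟨h1, h2, h3⟩ l
      rcases fin3_cover c i j hci hcj hij l with rfl | rfl | rfl
      · simp [h1]
      · simp [hci.symm, h2]
      · simp [hcj.symm, h3]
    · intro h
      have a := h c
      have b := h i
      have d := h j
      simp [hci.symm, hcj.symm] at a b d
      exact ⟨a, b, d⟩
  rw [h1, Fintype.card_piFinset, prod3 _ c i j hci hcj hij]
  simp [hci.symm, hcj.symm]

/-- the part of `T` in class `i` -/
def cls {n : ℕ} (T : Finset (Fin 3 × Fin n)) (i : Fin 3) : Finset (Fin n) :=
  Finset.univ.filter (fun x => (i, x) ∈ T)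

lemma cls_card_sum {n : ℕ} (T : Finset (Fin 3 × Fin n)) : ∑ i, (cls T i).card = T.card := by
  have h : T = Finset.univ.biUnion (fun i => (cls T i).image (fun x => (i, x))) := by
    ext ⟨i, x⟩
    simp [cls]
  conv_rhs => rw [h]
  rw [Finset.card_biUnion]
  · refine Finset.sum_congr rfl fun i _ => ?_
    rw [Finset.card_image_of_injective]
    intro a b hab
    simpa using hab
  · intro i _ j _ hij
    rw [Function.onFun, Finset.disjoint_left]
    rintro ⟨a, b⟩ h1 h2
    simp at h1 h2
    exact hij (h1.2.trans h2.2.symm)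

lemma cls_card_le {n : ℕ} (T : Finset (Fin 3 × Fin n)) (i : Fin 3) :
    (cls T i).card ≤ T.card := by
  rw [← cls_card_sum T]
  exact Finset.single_le_sum (f := fun i => (cls T i).card) (fun _ _ => Nat.zero_le _)
    (Finset.mem_univ i)

lemma greedy {n m : ℕ} (H : Finset (Fin 3 → Fin n)) (T : Finset (Fin 3 × Fin n)) :
    (∀ p ∈ T, 2 * m * n < deg3 H p.1 p.2) →
    ∀ M : Finset (Fin 3 → Fin n), M ⊆ H → IsMat M → (∀ e ∈ M, ∀ i, (i, e i) ∉ T) →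
    M.card + T.card ≤ m + 1 →
    ∃ M' : Finset (Fin 3 → Fin n), M' ⊆ H ∧ IsMat M' ∧ M'.card = M.card + T.card := by
  classical
  induction T using Finset.induction_on with
  | empty =>
    intro _ M h1 h2 _ _
    exact ⟨M, h1, h2, by simp⟩
  | insert v T hv ih =>
    intro hT M hM hmat hav hcard
    obtain ⟨c, x⟩ := v
    obtain ⟨i, j, hci, hcj, hij⟩ := exists_others c
    rw [Finset.card_insert_of_notMem hv] at hcard
    let F : Fin 3 → Finset (Fin n) := fun l => cls T l ∪ M.image (fun e => e l)
    have hF : ∀ l, (F l).card ≤ m := by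
      intro l
      have h1 := Finset.card_union_le (cls T l) (M.image (fun e => e l))
      have h2 := cls_card_le T l
      have h3 : (M.image (fun e => e l)).card ≤ M.card := Finset.card_image_le
      show (cls T l ∪ M.image (fun e => e l)).card ≤ m
      omega
    have hd := hT (c, x) (Finset.mem_insert_self _ _)
    have hex : ∃ e ∈ H, e c = x ∧ e i ∉ F i ∧ e j ∉ F j := by
      by_contra hcon
      push Not at hcon
      have hsub : H.filter (fun e => e c = x) ⊆
          H.filter (fun e => e c = x ∧ e i ∈ F i) ∪ H.filter (fun e => e c = x ∧ e j ∈ F j) := by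
        intro e he
        simp only [Finset.mem_filter, Finset.mem_union] at he ⊢
        by_cases h : e i ∈ F i
        · exact Or.inl ⟨he.1, he.2, h⟩
        · exact Or.inr ⟨he.1, he.2, hcon e he.1 he.2 h⟩
      have h1 := (Finset.card_le_card hsub).trans (Finset.card_union_le _ _)
      have h2 := bad_count H c i j hci hcj hij x (F i)
      have h3 := bad_count H c j i hcj hci hij.symm x (F j)
      have h4 := Nat.mul_le_mul_right n (hF i)
      have h5 := Nat.mul_le_mul_right n (hF j)
      simp only [deg3] at hd
      have : 2 * m * n = m * n + m * n := by ring
      omega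
    obtain ⟨e, heH, hec, hei, hej⟩ := hex
    have hdis : ∀ f ∈ M, ∀ l, e l ≠ f l := by
      intro f hf l hl
      rcases fin3_cover c i j hci hcj hij l with rfl | rfl | rfl
      · apply hav f hf l
        rw [← hl, hec]
        exact Finset.mem_insert_self _ _
      · apply hei
        rw [hl]
        exact Finset.mem_union_right _ (Finset.mem_image_of_mem (fun e => e l) hf)
      · apply hej
        rw [hl]
        exact Finset.mem_union_right _ (Finset.mem_image_of_mem (fun e => e l) hf)
    have heM : e ∉ M := fun h => hdis e h c rfl
    have := ih (fun p hp => hT p (Finset.mem_insert_of_mem hp)) (insert e M)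
      (Finset.insert_subset heH hM) ?_ ?_ ?_
    · obtain ⟨M', h1, h2, h3⟩ := this
      refine ⟨M', h1, h2, ?_⟩
      rw [h3, Finset.card_insert_of_notMem heM, Finset.card_insert_of_notMem hv]
      omega
    · intro f hf g hg hfg l
      rw [Finset.mem_insert] at hf hg
      rcases hf with rfl | hf
      · rcases hg with rfl | hg
        · exact absurd rfl hfg
        · exact hdis g hg l
      · rcases hg with rfl | hg
        · exact (hdis f hf l).symm
        · exact hmat f hf g hg hfg l
    · intro f hf l hl
      rw [Finset.mem_insert] at hf
      rcases hf with rfl | hf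
      · rcases fin3_cover c i j hci hcj hij l with rfl | rfl | rfl
        · rw [hec] at hl; exact hv hl
        · exact hei (Finset.mem_union_left _ (by simp [cls, hl]))
        · exact hej (Finset.mem_union_left _ (by simp [cls, hl]))
      · exact hav f hf l (Finset.mem_insert_of_mem hl)
    · rw [Finset.card_insert_of_notMem heM]
      omega

/-- degree in the graph after deleting `T` -/
lemma deg_avoid {n : ℕ} (H : Finset (Fin 3 → Fin n)) (T : Finset (Fin 3 × Fin n))
    (c i j : Fin 3) (hci : c ≠ i) (hcj : c ≠ j) (hij : i ≠ j) (x : Fin n) (hx : x ∉ cls T c) :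
    deg3 H c x + (n - (cls T i).card) * (n - (cls T j).card) ≤
      n ^ 2 + deg3 (H.filter (fun e => ∀ l, (l, e l) ∉ T)) c x := by
  classical
  have hA := card_avoid c i j hci hcj hij x (fun l => (cls T l)ᶜ)
  have hAll := card_avoid c i j hci hcj hij x (fun _ => (Finset.univ : Finset (Fin n)))
  simp only [Finset.card_compl, Fintype.card_fin] at hA
  simp only [Finset.card_univ, Fintype.card_fin] at hAll
  set A := Finset.univ.filter
    (fun e : Fin 3 → Fin n => e c = x ∧ e i ∈ (cls T i)ᶜ ∧ e j ∈ (cls T j)ᶜ) with hAdef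
  have h := Finset.card_union_add_card_inter (H.filter (fun e => e c = x)) A
  have h1 : (H.filter (fun e => e c = x) ∪ A).card ≤ n ^ 2 := by
    rw [pow_two, ← hAll]
    apply Finset.card_le_card
    intro e he
    simp only [Finset.mem_filter, Finset.mem_union, Finset.mem_univ, true_and, A] at he ⊢
    tauto
  have h2 : H.filter (fun e => e c = x) ∩ A ⊆
      (H.filter (fun e => ∀ l, (l, e l) ∉ T)).filter (fun e => e c = x) := by
    intro e he
    simp only [Finset.mem_filter, Finset.mem_inter, Finset.mem_univ, true_and, A,
      Finset.mem_compl, cls] at he ⊢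
    refine ⟨⟨he.1.1, fun l => ?_⟩, he.1.2⟩
    rcases fin3_cover c i j hci hcj hij l with rfl | rfl | rfl
    · rw [he.1.2]; simpa [cls] using hx
    · exact he.2.2.1
    · exact he.2.2.2
  have h3 := Finset.card_le_card h2
  simp only [deg3]
  omega

lemma card_ge {n : ℕ} (G : Finset (Fin 3 → Fin n)) (S : Finset (Fin n)) (c : Fin 3) (q : ℕ)
    (h : ∀ x ∈ S, q ≤ deg3 G c x) : S.card * q ≤ G.card := by
  have h1 : ∑ x ∈ S, deg3 G c x ≤ G.card := by
    have := Finset.card_eq_sum_card_fiberwise (f := fun e : Fin 3 → Fin n => e c)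
      (s := G.filter (fun e => e c ∈ S)) (t := S) (by intro e he; simp at he; exact he.2)
    refine le_trans (le_of_eq ?_) (Finset.card_le_card (Finset.filter_subset (fun e => e c ∈ S) G))
    rw [this]
    refine Finset.sum_congr rfl fun x hx => ?_
    rw [deg3, Finset.filter_filter]
    congr 1
    ext e
    simp only [Finset.mem_filter]
    constructor
    · rintro ⟨a, b⟩; exact ⟨a, by rw [b]; exact hx, b⟩
    · rintro ⟨a, _, b⟩; exact ⟨a, b⟩
  refine le_trans ?_ h1
  rw [← smul_eq_mul]
  exact Finset.card_nsmul_le_sum _ _ _ h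

/-- A graph whose matchings have size at most `k` and with small degrees has few edges. -/
lemma card_le_of_no_matching {n k D : ℕ} (G : Finset (Fin 3 → Fin n))
    (hD : ∀ e ∈ G, ∀ i, deg3 G i (e i) ≤ D)
    (hk : ∀ M ⊆ G, IsMat M → M.card ≤ k) : G.card ≤ 3 * k * D := by
  classical
  obtain ⟨M, hM, hmax⟩ := Finset.exists_max_image (G.powerset.filter (fun M => IsMat M))
    Finset.card ⟨∅, Finset.mem_filter.2 ⟨by simp, by simp [IsMat]⟩⟩
  simp only [Finset.mem_filter, Finset.mem_powerset] at hM hmax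
  have hsub : G ⊆ (M ×ˢ (Finset.univ : Finset (Fin 3))).biUnion
      (fun p => G.filter (fun e => e p.2 = p.1 p.2)) := by
    intro e he
    by_contra hcon
    simp only [Finset.mem_biUnion, Finset.mem_product, Finset.mem_univ, and_true,
      Finset.mem_filter, not_exists, not_and] at hcon
    have hdis : ∀ f ∈ M, ∀ l, e l ≠ f l := fun f hf l => hcon (f, l) hf he
    have heM : e ∉ M := fun h => hdis e h 0 rfl
    have := hmax (insert e M) ⟨Finset.insert_subset he hM.1, ?_⟩
    · rw [Finset.card_insert_of_notMem heM] at this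
      omega
    · intro f hf g hg hfg l
      rw [Finset.mem_insert] at hf hg
      rcases hf with rfl | hf
      · rcases hg with rfl | hg
        · exact absurd rfl hfg
        · exact hdis g hg l
      · rcases hg with rfl | hg
        · exact (hdis f hf l).symm
        · exact hM.2 f hf g hg hfg l
  refine (Finset.card_le_card hsub).trans ?_
  refine (Finset.card_biUnion_le_card_mul _ _ D ?_).trans ?_
  · rintro ⟨f, l⟩ hf
    simp only [Finset.mem_product, Finset.mem_univ, and_true] at hf
    exact hD f (hM.1 hf) l
  · rw [Finset.card_product]
    simp only [Finset.card_univ, Fintype.card_fin]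
    have := hk M hM.1 hM.2
    apply Nat.mul_le_mul_right
    omega

/-- In an intersecting family with minimum degree two no two edges share exactly two vertices. -/
lemma inter_aux {n : ℕ} (G : Finset (Fin 3 → Fin n)) (U : Fin 3 → Finset (Fin n))
    (hU : ∀ i, 3 ≤ (U i).card)
    (hdeg : ∀ i, ∀ x ∈ U i, ∃ e ∈ G, ∃ f ∈ G, e ≠ f ∧ e i = x ∧ f i = x)
    (hint : ∀ e ∈ G, ∀ f ∈ G, ∃ i, e i = f i)
    (i j k : Fin 3) (hij : i ≠ j) (hik : i ≠ k) (hjk : j ≠ k)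
    (e f : Fin 3 → Fin n) (he : e ∈ G) (hf : f ∈ G) (hei : e i = f i) (hej : e j = f j) :
    e = f := by
  by_contra hne
  have hext : ∀ g h : Fin 3 → Fin n, g i = h i → g j = h j → g k = h k → g = h := by
    intro g h h1 h2 h3
    funext l
    rcases fin3_cover i j k hij hik hjk l with rfl | rfl | rfl <;> assumption
  have hek : e k ≠ f k := fun h => hne (hext e f hei hej h)
  have hcov : ∀ g ∈ G, g i = e i ∨ g j = e j := by
    intro g hg
    by_contra hcon
    push Not at hcon
    have key : ∀ h ∈ G, h i = e i → h j = e j → g k = h k := by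
      intro h hh h1 h2
      obtain ⟨l, hl⟩ := hint g hg h hh
      rcases fin3_cover i j k hij hik hjk l with rfl | rfl | rfl
      · exact absurd (hl.trans h1) hcon.1
      · exact absurd (hl.trans h2) hcon.2
      · exact hl
    exact hek ((key e he rfl rfl).symm.trans (key f hf hei.symm hej.symm))
  obtain ⟨w, hw, hwe⟩ := Finset.exists_mem_ne (by have := hU i; omega : 1 < (U i).card) (e i)
  obtain ⟨w', hw', hwe'⟩ := Finset.exists_mem_ne (by have := hU j; omega : 1 < (U j).card) (e j)
  obtain ⟨g, hg, g', hg', hgg, hgw, hgw'⟩ := hdeg i w hw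
  obtain ⟨h, hh, _, _, _, hhw, _⟩ := hdeg j w' hw'
  have hgj : g j = e j := (hcov g hg).resolve_left (by rw [hgw]; exact hwe)
  have hgj' : g' j = e j := (hcov g' hg').resolve_left (by rw [hgw']; exact hwe)
  have hhi : h i = e i := (hcov h hh).resolve_right (by rw [hhw]; exact hwe')
  have key : ∀ g ∈ G, g i = w → g j = e j → g k = h k := by
    intro g hg h1 h2
    obtain ⟨l, hl⟩ := hint g hg h hh
    rcases fin3_cover i j k hij hik hjk l with rfl | rfl | rfl
    · exact absurd (h1.symm.trans (hl.trans hhi)) hwe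
    · exact absurd (hhw.symm.trans (hl.symm.trans h2)) hwe'
    · exact hl
  exact hgg (hext g g' (hgw.trans hgw'.symm) (hgj.trans hgj'.symm)
    ((key g hg hgw hgj).trans (key g' hg' hgw' hgj').symm))

lemma no_inter {n : ℕ} (G : Finset (Fin 3 → Fin n)) (U : Fin 3 → Finset (Fin n))
    (hU : ∀ i, 3 ≤ (U i).card)
    (hdeg : ∀ i, ∀ x ∈ U i, ∃ e ∈ G, ∃ f ∈ G, e ≠ f ∧ e i = x ∧ f i = x)
    (hint : ∀ e ∈ G, ∀ f ∈ G, ∃ i, e i = f i) : False := by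
  have lin := inter_aux G U hU hdeg hint
  have l01 := lin 0 1 2 (by decide) (by decide) (by decide)
  have l02 := lin 0 2 1 (by decide) (by decide) (by decide)
  have l12 := lin 1 2 0 (by decide) (by decide) (by decide)
  obtain ⟨x, y, z, hx, hy, hz, hxy, hxz, hyz⟩ := Finset.two_lt_card_iff.1 (hU 0)
  obtain ⟨e, he, f, hf, hef, hex, hfx⟩ := hdeg 0 x hx
  have h1 : e 1 ≠ f 1 := fun h => hef (l01 e f he hf (hex.trans hfx.symm) h)
  have h2 : e 2 ≠ f 2 := fun h => hef (l02 e f he hf (hex.trans hfx.symm) h)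
  -- every edge through `y ≠ x` uses one of two pairs
  have key : ∀ g ∈ G, g 0 ≠ x → (g 1 = e 1 ∧ g 2 = f 2) ∨ (g 1 = f 1 ∧ g 2 = e 2) := by
    intro g hg hgx
    have a : g 1 = e 1 ∨ g 2 = e 2 := by
      obtain ⟨l, hl⟩ := hint g hg e he
      fin_cases l
      · exact absurd (hl.trans hex) hgx
      · exact Or.inl hl
      · exact Or.inr hl
    have b : g 1 = f 1 ∨ g 2 = f 2 := by
      obtain ⟨l, hl⟩ := hint g hg f hf
      fin_cases l
      · exact absurd (hl.trans hfx) hgx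
      · exact Or.inl hl
      · exact Or.inr hl
    rcases a with a | a <;> rcases b with b | b
    · exact absurd (a.symm.trans b) h1
    · exact Or.inl ⟨a, b⟩
    · exact Or.inr ⟨b, a⟩
    · exact absurd (a.symm.trans b) h2
  obtain ⟨g, hg, g', hg', hgg, hgy, hgy'⟩ := hdeg 0 y hy
  obtain ⟨h, hh, _, _, _, hhz, _⟩ := hdeg 0 z hz
  have hgh : g ≠ h := fun hc => hyz (by rw [← hgy, ← hhz, hc])
  have hgh' : g' ≠ h := fun hc => hyz (by rw [← hgy', ← hhz, hc])
  have share : ∀ p ∈ G, ∀ q ∈ G, p ≠ q → p 1 = q 1 → p 2 = q 2 → False :=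
    fun p hp q hq hpq a b => hpq (l12 p q hp hq a b)
  have kg := key g hg (by rw [hgy]; exact hxy.symm)
  have kg' := key g' hg' (by rw [hgy']; exact hxy.symm)
  have kh := key h hh (by rw [hhz]; exact hxz.symm)
  have s1 := share g hg g' hg' hgg
  have s2 := share g hg h hh hgh
  have s3 := share g' hg' h hh hgh'
  clear key lin l01 l02 l12 share hdeg hint
  rcases kg with ⟨a, b⟩ | ⟨a, b⟩ <;> rcases kg' with ⟨a', b'⟩ | ⟨a', b'⟩ <;>
    rcases kh with ⟨a'', b''⟩ | ⟨a'', b''⟩ <;>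
    first
    | exact s1 (a.trans a'.symm) (b.trans b'.symm)
    | exact s2 (a.trans a''.symm) (b.trans b''.symm)
    | exact s3 (a'.trans a''.symm) (b'.trans b''.symm)

lemma prod_bound (R D a b : ℤ) (hR : 0 ≤ R) (hD : 0 ≤ D) (ha : 0 ≤ a) (hb : 0 ≤ b)
    (h1 : R - 3 * D ≤ a) (h2 : R - 3 * D ≤ b) : R ^ 2 - 6 * R * D ≤ a * b := by
  by_cases h : R ≤ 3 * D
  · nlinarith [mul_nonneg ha hb, mul_nonneg hR hD]
  · push Not at h
    nlinarith [mul_le_mul h1 h2 (by linarith) ha, sq_nonneg D]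

/-- The arithmetic core. `q` is a lower bound for degrees in the reduced graph. -/
lemma arith_main (n r s m a b c q : ℤ) (hr : 0 ≤ r) (hs1 : 1 ≤ s) (hs3 : s ≤ 3)
    (hm : m = 3 * r + s) (hn : 2187 * (m + 1) ≤ n) (ha : 0 ≤ a) (hb : 0 ≤ b)
    (hac : a ≤ c) (hbc : b ≤ c) (ht : a + b + c ≤ m)
    (hq1 : s = 1 → q = (n - a) * (n - b) - (n - r) ^ 2 + 2)
    (hq2 : s = 2 → q = (n - a) * (n - b) - (n - r) * (n - r - 1) + 1)
    (hq3 : s = 3 → q = (n - a) * (n - b) - (n - r - 1) ^ 2 + 1) :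
    6 * (m - (a + b + c)) * m * n < (n - c) * q ∨
    (s = 1 ∧ a = r ∧ b = r ∧ c = r) := by
  -- uniform consequence of a positive deficit
  have fin : ∀ D : ℤ, 1 ≤ D → n * D ≤ 2 * q → 2 * (m - (a + b + c)) ≤ 5 * D →
      6 * (m - (a + b + c)) * m * n < (n - c) * q := by
    intro D hD hq hk
    have hm0 : 0 ≤ m := by linarith
    have hn0 : 0 < n := by linarith
    have hnD : 0 < n * D := by positivity
    have e1 : 6 * (m - (a + b + c)) * m * n ≤ 15 * D * m * n := by
      have : 0 ≤ m * n := by positivity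
      nlinarith
    have e2 : (n - c) * (n * D) ≤ 2 * ((n - c) * q) := by
      have : 0 ≤ n - c := by linarith
      nlinarith
    have e3 : 30 * m * (n * D) < (n - c) * (n * D) := by
      apply mul_lt_mul_of_pos_right _ hnD
      linarith
    nlinarith
  obtain rfl | rfl | rfl : s = 1 ∨ s = 2 ∨ s = 3 := by omega
  · have hq := hq1 rfl
    by_cases hD : a + b ≤ 2 * r - 1
    · left
      refine fin (2 * r - a - b) (by linarith) ?_ (by linarith)
      have := prod_bound r (2 * r - a - b) a b hr (by linarith) ha hb (by linarith) (by linarith)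
      have : 12 * r * (2 * r - a - b) ≤ n * (2 * r - a - b) :=
        mul_le_mul_of_nonneg_right (by linarith) (by linarith)
      nlinarith
    · by_cases h3 : c = r
      · right; omega
      · left
        have hc : c = r + 1 := by omega
        have hk : m - (a + b + c) = 0 := by omega
        have hq0 : 0 < q := by
          have : (a = r ∧ b = r) ∨ (a = r - 1 ∧ b = r + 1) ∨ (a = r + 1 ∧ b = r - 1) := by omega
          rcases this with ⟨rfl, rfl⟩ | ⟨rfl, rfl⟩ | ⟨rfl, rfl⟩ <;> nlinarith
        rw [hk]
        have : 0 < (n - c) * q := mul_pos (by linarith) hq0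
        linarith
  · have hq := hq2 rfl
    left
    by_cases hD : a + b ≤ 2 * r
    · refine fin (2 * r + 1 - a - b) (by linarith) ?_ (by linarith)
      have := prod_bound r (2 * r + 1 - a - b) a b hr (by linarith) ha hb (by linarith)
        (by linarith)
      have : (14 * r) * (2 * r + 1 - a - b) ≤ n * (2 * r + 1 - a - b) :=
        mul_le_mul_of_nonneg_right (by linarith) (by linarith)
      nlinarith
    · have hk : m - (a + b + c) = 0 := by omega
      have hq0 : 0 < q := by
        have : (a = r ∧ b = r + 1) ∨ (a = r + 1 ∧ b = r) := by omega
        rcases this with ⟨rfl, rfl⟩ | ⟨rfl, rfl⟩ <;> nlinarith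
      rw [hk]
      have : 0 < (n - c) * q := mul_pos (by linarith) hq0
      linarith
  · have hq := hq3 rfl
    left
    by_cases hD : a + b ≤ 2 * r + 1
    · refine fin (2 * r + 2 - a - b) (by linarith) ?_ (by linarith)
      have := prod_bound (r + 1) (2 * r + 2 - a - b) a b (by linarith) (by linarith) ha hb
        (by linarith) (by linarith)
      have : (12 * (r + 1)) * (2 * r + 2 - a - b) ≤ n * (2 * r + 2 - a - b) :=
        mul_le_mul_of_nonneg_right (by linarith) (by linarith)
      nlinarith
    · have hk : m - (a + b + c) = 0 := by omega
      have hq0 : 0 < q := by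
        have : (a = r + 1 ∧ b = r + 1) := by omega
        rcases this with ⟨rfl, rfl⟩; nlinarith
      rw [hk]
      have : 0 < (n - c) * q := mul_pos (by linarith) hq0
      linarith

lemma exists_max_class (f : Fin 3 → ℕ) :
    ∃ c i j : Fin 3, c ≠ i ∧ c ≠ j ∧ i ≠ j ∧ f i ≤ f c ∧ f j ≤ f c := by
  obtain ⟨c, -, hc⟩ := Finset.exists_max_image Finset.univ f ⟨0, Finset.mem_univ 0⟩
  obtain ⟨i, j, h1, h2, h3⟩ := exists_others c
  exact ⟨c, i, j, h1, h2, h3, hc i (Finset.mem_univ _), hc j (Finset.mem_univ _)⟩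

/-- Let `r ≥ 0` and `1 ≤ s ≤ 3`. If `H` is a 3-partite 3-graph with classes of size
`n ≥ 3⁷·(3r+s+1)` and `δ₁(H) > d₃(n,r,s)`, then `H` contains a matching of size
`3r+s+1`. -/
theorem matching_of_degree_threshold (n r s : ℕ) (hs1 : 1 ≤ s) (hs3 : s ≤ 3)
    (hn : 3 ^ 7 * (3 * r + s + 1) ≤ n)
    (H : Finset (Fin 3 → Fin n))
    (hδ : ∀ (c : Fin 3) (x : Fin n), d3 n r s < deg3 H c x) :
    ∃ M : Finset (Fin 3 → Fin n), M ⊆ H ∧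
      (∀ e ∈ M, ∀ f ∈ M, e ≠ f → ∀ i, e i ≠ f i) ∧
      M.card = 3 * r + s + 1 := by
  classical
  set m := 3 * r + s with hm
  suffices h : ∃ M : Finset (Fin 3 → Fin n), M ⊆ H ∧ IsMat M ∧ M.card = m + 1 from h
  by_contra hno
  set T : Finset (Fin 3 × Fin n) :=
    Finset.univ.filter (fun p => 2 * m * n < deg3 H p.1 p.2) with hTdef
  have hTbig : ∀ p ∈ T, 2 * m * n < deg3 H p.1 p.2 := by
    intro p hp
    simpa [T] using hp
  have hTm : T.card ≤ m := by
    by_contra hcon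
    push Not at hcon
    obtain ⟨T', hT', hcard⟩ := Finset.exists_subset_card_eq (show m + 1 ≤ T.card from hcon)
    obtain ⟨M, h1, h2, h3⟩ := greedy (m := m) H T' (fun p hp => hTbig p (hT' hp)) ∅ (by simp)
      (by simp [IsMat]) (by simp) (by simp [hcard])
    exact hno ⟨M, h1, h2, by simpa [hcard] using h3⟩
  set G := H.filter (fun e => ∀ l, (l, e l) ∉ T) with hG
  have hGno : ∀ M ⊆ G, IsMat M → M.card ≤ m - T.card := by
    intro M hM hmat
    by_contra hcon
    push Not at hcon
    obtain ⟨M', hM', hcard⟩ := Finset.exists_subset_card_eq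
      (show m + 1 - T.card ≤ M.card by omega)
    obtain ⟨M'', h1, h2, h3⟩ := greedy (m := m) H T hTbig M'
      (fun e he => (Finset.mem_filter.1 (hM (hM' he))).1)
      (fun e he f hf => hmat e (hM' he) f (hM' hf))
      (fun e he => (Finset.mem_filter.1 (hM (hM' he))).2) (by omega)
    exact hno ⟨M'', h1, h2, by omega⟩
  have hGcard : G.card ≤ 3 * (m - T.card) * (2 * m * n) := by
    refine card_le_of_no_matching G ?_ hGno
    intro e he i
    have h1 := (Finset.mem_filter.1 he).2 i
    have h2 : deg3 H i (e i) ≤ 2 * m * n := by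
      by_contra hcon
      push Not at hcon
      exact h1 (by simpa [T] using hcon)
    refine le_trans ?_ h2
    exact Finset.card_le_card (Finset.filter_subset_filter _ (Finset.filter_subset _ _))
  obtain ⟨c, i, j, hci, hcj, hij, hic, hjc⟩ := exists_max_class (fun l => (cls T l).card)
  have hsum := cls_card_sum T
  rw [sum3 _ c i j hci hcj hij] at hsum
  have hn' : 2187 * (m + 1) ≤ n := by simpa using hn
  set a := (cls T i).card with ha
  set b := (cls T j).card with hb
  set t := (cls T c).card with ht
  -- degrees in the reduced graph, over the integers
  have hdeg : ∀ c i j : Fin 3, c ≠ i → c ≠ j → i ≠ j → ∀ x ∉ cls T c,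
      (d3 n r s : ℤ) + 1 + ((n : ℤ) - (cls T i).card) * ((n : ℤ) - (cls T j).card) - (n : ℤ) ^ 2
        ≤ (deg3 G c x : ℤ) := by
    intro c i j hci hcj hij x hx
    have h1 := deg_avoid H T c i j hci hcj hij x hx
    have h2 := hδ c x
    have h3 := cls_card_le T i
    have h4 := cls_card_le T j
    have h5 : ((n - (cls T i).card : ℕ) : ℤ) = (n : ℤ) - (cls T i).card :=
      Nat.cast_sub (by omega)
    have h6 : ((n - (cls T j).card : ℕ) : ℤ) = (n : ℤ) - (cls T j).card :=
      Nat.cast_sub (by omega)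
    zify at h1 h2
    rw [h5, h6] at h1
    linarith
  have hd1 : s = 1 → (d3 n r s : ℤ) = (n : ℤ) ^ 2 - ((n : ℤ) - r) ^ 2 + 1 := by
    intro h
    have e1 : (n - r) ^ 2 ≤ n ^ 2 := Nat.pow_le_pow_left (by omega) 2
    simp only [d3, h, if_true]
    push_cast [e1]
    rw [Nat.cast_sub (by omega)]
  have hd2 : s = 2 → (d3 n r s : ℤ) = (n : ℤ) ^ 2 - ((n : ℤ) - r) * ((n : ℤ) - r - 1) := by
    intro h
    have e1 : (n - r) * (n - r - 1) ≤ n ^ 2 := by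
      rw [pow_two]; exact Nat.mul_le_mul (by omega) (by omega)
    have e2 : ((n - r : ℕ) : ℤ) = (n : ℤ) - r := Nat.cast_sub (by omega)
    have e3 : ((n - r - 1 : ℕ) : ℤ) = (n : ℤ) - r - 1 := by omega
    have : d3 n r s = n ^ 2 - (n - r) * (n - r - 1) := by simp [d3, h]
    rw [this, Nat.cast_sub e1, Nat.cast_mul, e2, e3]
    push_cast; ring
  have hd3 : s = 3 → (d3 n r s : ℤ) = (n : ℤ) ^ 2 - ((n : ℤ) - r - 1) ^ 2 := by
    intro h
    have e1 : (n - r - 1) ^ 2 ≤ n ^ 2 := Nat.pow_le_pow_left (by omega) 2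
    have e3 : ((n - r - 1 : ℕ) : ℤ) = (n : ℤ) - r - 1 := by omega
    have : d3 n r s = n ^ 2 - (n - r - 1) ^ 2 := by simp [d3, h]
    rw [this, Nat.cast_sub e1, Nat.cast_pow, Nat.cast_pow, e3]
  have main := arith_main n r s m a b t
    ((d3 n r s : ℤ) + 1 + ((n : ℤ) - a) * ((n : ℤ) - b) - (n : ℤ) ^ 2)
    (by positivity) (by omega) (by omega) (by omega) (by omega) (by omega) (by omega)
    (by omega) (by omega) (by omega)
    (fun h => by rw [hd1 (by omega)]; ring) (fun h => by rw [hd2 (by omega)]; ring)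
    (fun h => by rw [hd3 (by omega)]; ring)
  rcases main with main | ⟨h1, h2, h3, h4⟩
  · set q : ℤ := (d3 n r s : ℤ) + 1 + ((n : ℤ) - a) * ((n : ℤ) - b) - (n : ℤ) ^ 2 with hq
    have hge := card_ge G (cls T c)ᶜ c q.toNat (by
      intro x hx
      rw [Finset.mem_compl] at hx
      have := hdeg c i j hci hcj hij x hx
      rw [Int.toNat_le]
      exact this)
    rw [Finset.card_compl, Fintype.card_fin] at hge
    have h5 : ((n - t : ℕ) : ℤ) = (n : ℤ) - t := Nat.cast_sub (by omega)
    have h6 : ((m - T.card : ℕ) : ℤ) = (m : ℤ) - (a + b + t) := by omega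
    have h7 : q ≤ (q.toNat : ℤ) := Int.self_le_toNat q
    have h8 : ((n : ℤ) - t) * q ≤ ((n : ℤ) - t) * q.toNat :=
      mul_le_mul_of_nonneg_left h7 (by omega)
    have h9 := hge.trans hGcard
    zify at h9
    rw [h5, h6] at h9
    nlinarith
  · have h1' : s = 1 := by exact_mod_cast h1
    have hall : ∀ l, (cls T l).card = r := by
      intro l
      rcases fin3_cover c i j hci hcj hij l with rfl | rfl | rfl <;> omega
    refine no_inter G (fun l => (cls T l)ᶜ) ?_ ?_ ?_
    · intro l
      rw [Finset.card_compl, Fintype.card_fin, hall]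
      omega
    · intro l x hx
      rw [Finset.mem_compl] at hx
      obtain ⟨i', j', g1, g2, g3⟩ := exists_others l
      have := hdeg l i' j' g1 g2 g3 x hx
      rw [hd1 h1', hall, hall] at this
      have h2 : 1 < deg3 G l x := by
        zify
        nlinarith
      obtain ⟨e, he, f, hf, hef⟩ := Finset.one_lt_card.1 h2
      rw [Finset.mem_filter] at he hf
      exact ⟨e, he.1, f, hf.1, hef, he.2, hf.2⟩
    · intro e he f hf
      by_contra hcon
      push Not at hcon
      have hef : e ≠ f := fun h => hcon 0 (by rw [h])
      have := hGno {e, f} (by intro x hx; simp at hx; rcases hx with rfl | rfl <;> assumption) (by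
        intro x hx y hy hxy l
        simp only [Finset.mem_insert, Finset.mem_singleton] at hx hy
        rcases hx with rfl | rfl <;> rcases hy with rfl | rfl
        · exact absurd rfl hxy
        · exact hcon l
        · exact (hcon l).symm
        · exact absurd rfl hxy)
      rw [Finset.card_pair hef] at this
      omega
end

section
/- There is a constant c > 0 such that for all γ > 0, every 3-partite 3-graph H with n > c·γ^{-12} vertices in each class and minimum vertex degree δ_1(H) ≥ (5/9 + γ)·n^2 contains a perfect matching. -/
namespace PMProof

open Finset

lemma sum_update_avg {ι α : Type*} [Fintype ι] [DecidableEq ι] [Fintype α] 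
    (F : (ι → α) → ℝ) (a : ι) :
    ∑ f : ι → α, ∑ x : α, F (Function.update f a x) = (Fintype.card α : ℝ) * ∑ f : ι → α, F f := by
  classical
  have hinv : Function.Involutive
      (fun p : (ι → α) × α => (Function.update p.1 a p.2, p.1 a)) := by
    rintro ⟨f, x⟩
    simp
  have h1 : ∑ p : (ι → α) × α, F (Function.update p.1 a p.2) = ∑ p : (ι → α) × α, F p.1 :=
    Equiv.sum_comp (hinv.toPerm) (fun p : (ι → α) × α => F p.1)
  rw [Fintype.sum_prod_type, Fintype.sum_prod_type] at h1
  simp only [h1, sum_const, card_univ, nsmul_eq_mul, mul_sum]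

lemma sum_disjoint_zero {ι α : Type*} [Fintype ι] [DecidableEq ι] [Fintype α]
    (h φ : α → α → ℝ) (h0 : ∑ x, ∑ y, h x y = 0) (a b c d : ι) (hab : a ≠ b)
    (hac : a ≠ c) (had : a ≠ d) (hbc : b ≠ c) (hbd : b ≠ d) :
    ∑ f : ι → α, h (f a) (f b) * φ (f c) (f d) = 0 := by
  classical
  rcases isEmpty_or_nonempty α with he | hne
  · apply Finset.sum_eq_zero
    intro f _
    exact (he.false (f a)).elim
  have hc : (Fintype.card α : ℝ) ≠ 0 := by
    exact_mod_cast Fintype.card_ne_zero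
  have h1 := sum_update_avg (fun f : ι → α => h (f a) (f b) * φ (f c) (f d)) a
  have h2 := sum_update_avg (fun f : ι → α => ∑ x : α, h x (f b) * φ (f c) (f d)) b
  simp only [Function.update_self, Function.update_of_ne hab.symm, Function.update_of_ne hac.symm,
    Function.update_of_ne had.symm, Function.update_of_ne hbc.symm, Function.update_of_ne hbd.symm] at h1 h2
  have h3 : ∑ f : ι → α, ∑ y : α, ∑ x : α, h x y * φ (f c) (f d) = 0 := by
    apply Finset.sum_eq_zero
    intro f _
    simp only [← Finset.sum_mul]
    rw [Finset.sum_comm, h0, zero_mul]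
  rw [h3, h1] at h2
  have := h2.symm
  simpa [hc] using this

lemma second_moment {s : ℕ} {α : Type*} [Fintype α] 
    (h : α → α → ℝ) (h0 : ∑ x, ∑ y, h x y = 0) (h1 : ∀ x y, |h x y| ≤ 1) :
    ∑ f : Fin s → α, (∑ a, ∑ b, h (f a) (f b)) ^ 2
      ≤ 5 * (s : ℝ) ^ 3 * (Fintype.card α : ℝ) ^ s := by
  classical
  have e1 : ∀ f : Fin s → α, (∑ a, ∑ b, h (f a) (f b)) ^ 2 =
      ∑ a, ∑ b, ∑ c, ∑ d, h (f a) (f b) * h (f c) (f d) := by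
    intro f
    rw [sq, Finset.sum_mul]
    refine Finset.sum_congr rfl fun a _ => ?_
    rw [Finset.sum_mul]
    refine Finset.sum_congr rfl fun b _ => ?_
    rw [Finset.mul_sum]
    refine Finset.sum_congr rfl fun c _ => ?_
    rw [Finset.mul_sum]
  simp only [e1]
  have e2 : ∑ f : Fin s → α, ∑ a, ∑ b, ∑ c, ∑ d, h (f a) (f b) * h (f c) (f d)
      = ∑ a, ∑ b, ∑ c, ∑ d, ∑ f : Fin s → α, h (f a) (f b) * h (f c) (f d) := by
    rw [Finset.sum_comm]
    refine Finset.sum_congr rfl fun a _ => ?_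
    rw [Finset.sum_comm]
    refine Finset.sum_congr rfl fun b _ => ?_
    rw [Finset.sum_comm]
    refine Finset.sum_congr rfl fun c _ => ?_
    rw [Finset.sum_comm]
  rw [e2]
  set N : ℝ := (Fintype.card α : ℝ) ^ s with hN
  have hN0 : 0 ≤ N := by positivity
  have key : ∀ a b c d : Fin s, ∑ f : Fin s → α, h (f a) (f b) * h (f c) (f d) ≤
      ((if a = b then 1 else 0) + (if a = c then 1 else 0) + (if a = d then 1 else 0)
        + (if b = c then 1 else 0) + (if b = d then 1 else 0)) * N := by
    intro a b c d
    by_cases hz : a ≠ b ∧ a ≠ c ∧ a ≠ d ∧ b ≠ c ∧ b ≠ d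
    · obtain ⟨q1, q2, q3, q4, q5⟩ := hz
      rw [sum_disjoint_zero h h h0 a b c d q1 q2 q3 q4 q5]
      positivity
    · have hb : ∑ f : Fin s → α, h (f a) (f b) * h (f c) (f d) ≤ N := by
        calc ∑ f : Fin s → α, h (f a) (f b) * h (f c) (f d) ≤ ∑ f : Fin s → α, (1 : ℝ) := by
              refine Finset.sum_le_sum fun f _ => ?_
              refine (le_abs_self _).trans ?_
              rw [abs_mul]
              exact mul_le_one₀ (h1 _ _) (abs_nonneg _) (h1 _ _)
          _ = N := by simp [hN]
      refine hb.trans ?_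
      have : (1 : ℝ) ≤ ((if a = b then 1 else 0) + (if a = c then 1 else 0) + (if a = d then 1 else 0)
        + (if b = c then 1 else 0) + (if b = d then 1 else 0)) := by
        by_contra hcon
        apply hz
        refine ⟨?_, ?_, ?_, ?_, ?_⟩ <;> rintro rfl <;> apply hcon <;> 
          (simp only [if_true]) <;> 
          (repeat' split_ifs) <;> norm_num
      nlinarith
  calc _ ≤ ∑ a : Fin s, ∑ b : Fin s, ∑ c : Fin s, ∑ d : Fin s, (((if a = b then 1 else 0) + (if a = c then 1 else 0) + (if a = d then 1 else 0)
        + (if b = c then 1 else 0) + (if b = d then 1 else 0)) * N : ℝ) := by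
        gcongr with a _ b _ c _ d _
        exact key a b c d
    _ = 5 * (s : ℝ) ^ 3 * N := by
        simp only [← Finset.sum_mul, Finset.sum_add_distrib]
        congr 1
        simp
        ring

lemma collisions {s : ℕ} {α : Type*} [Fintype α] [DecidableEq α] :
    (Fintype.card α : ℝ) * ∑ f : Fin s → α, ∑ a, ∑ b, (if a ≠ b ∧ f a = f b then (1:ℝ) else 0)
      ≤ (s : ℝ) ^ 2 * (Fintype.card α : ℝ) ^ s := by
  have e2 : ∑ f : Fin s → α, ∑ a, ∑ b, (if a ≠ b ∧ f a = f b then (1:ℝ) else 0) = 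
     ∑ a, ∑ b, ∑ f : Fin s → α, (if a ≠ b ∧ f a = f b then (1:ℝ) else 0) := by
    rw [Finset.sum_comm]
    refine Finset.sum_congr rfl fun a _ => ?_
    rw [Finset.sum_comm]
  rw [e2, Finset.mul_sum]
  simp only [Finset.mul_sum (s := (univ : Finset (Fin s)))]
  have : ∀ a b : Fin s, (Fintype.card α : ℝ) * ∑ f : Fin s → α, (if a ≠ b ∧ f a = f b then (1:ℝ) else 0) ≤ (Fintype.card α : ℝ) ^ s := by
    intro a b
    by_cases hab : a = b
    · simp [hab]
    have := sum_update_avg (fun f : Fin s → α => (if a ≠ b ∧ f a = f b then (1:ℝ) else 0)) a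
    rw [← this]
    simp [hab, Function.update_of_ne (Ne.symm hab)]
  calc _ ≤ ∑ a : Fin s, ∑ b : Fin s, (Fintype.card α : ℝ) ^ s := by
        gcongr with a _ b _
        exact this a b
    _ = _ := by simp; ring

lemma sampling {n R s : ℕ} (hR : 0 < R) (hs : s = R ^ 2) (hn : 2 * R ^ 4 < n) (D : ℝ)
    (g : Fin 3 → Fin n → Fin n → Prop) [∀ k x y, Decidable (g k x y)]
    (hg : ∀ k, D * (n:ℝ) ^ 2 ≤ ∑ x, ∑ y, (if g k x y then (1:ℝ) else 0)) :
    ∃ f : Fin s → Fin n, Function.Injective f ∧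
      ∀ k, (D - 6 / R) * (s : ℝ) ^ 2 ≤ ∑ a, ∑ b, (if g k (f a) (f b) then (1:ℝ) else 0) := by
  have hnpos : (0:ℝ) < n := by
    have : 0 < n := by omega
    exact_mod_cast this
  have hRpos : (0:ℝ) < R := by exact_mod_cast hR
  have hspos : (0:ℝ) < s := by rw [hs]; push_cast; positivity
  set d : Fin 3 → ℝ := fun k => (∑ x, ∑ y, (if g k x y then (1:ℝ) else 0)) / (n:ℝ)^2 with hd
  have hd0 : ∀ k, 0 ≤ d k := fun k => by
    simp only [hd]
    apply div_nonneg _ (by positivity)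
    refine Finset.sum_nonneg fun x _ => Finset.sum_nonneg fun y _ => ?_
    split_ifs <;> norm_num
  have hd1 : ∀ k, d k ≤ 1 := fun k => by
    simp only [hd]
    rw [div_le_one (by positivity)]
    calc _ ≤ ∑ x : Fin n, ∑ y : Fin n, (1:ℝ) := by
          gcongr; split_ifs <;> norm_num
      _ = _ := by simp; ring
  have hdD : ∀ k, D ≤ d k := fun k => by
    simp only [hd]
    rw [le_div_iff₀ (by positivity)]
    exact hg k
  set h : Fin 3 → Fin n → Fin n → ℝ := fun k x y => (if g k x y then (1:ℝ) else 0) - d k with hh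
  have hh0 : ∀ k, ∑ x, ∑ y, h k x y = 0 := fun k => by
    simp only [hh, Finset.sum_sub_distrib]
    simp only [sum_const, card_univ, Fintype.card_fin, nsmul_eq_mul, hd]
    field_simp
    ring
  have hh1 : ∀ k x y, |h k x y| ≤ 1 := fun k x y => by
    have := hd0 k
    have := hd1 k
    simp only [hh]
    rw [abs_le]
    split_ifs <;> constructor <;> linarith
  have hsm := fun k => second_moment (s := s) (h k) (hh0 k) (hh1 k)
  have hco := collisions (s := s) (α := Fin n)
  simp only [Fintype.card_fin] at hsm hco
  set N : ℝ := (n:ℝ) ^ s with hN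
  have hNpos : 0 < N := by positivity
  have hex : ∃ f : Fin s → Fin n, (∑ k, (∑ a, ∑ b, h k (f a) (f b)) ^ 2) / (30 * (s:ℝ)^3)
      + ∑ a, ∑ b, (if a ≠ b ∧ f a = f b then (1:ℝ) else 0) < 1 := by
    by_contra hcon
    push Not at hcon
    have h1 : N ≤ ∑ f : Fin s → Fin n, ((∑ k, (∑ a, ∑ b, h k (f a) (f b)) ^ 2) / (30 * (s:ℝ)^3)
      + ∑ a, ∑ b, (if a ≠ b ∧ f a = f b then (1:ℝ) else 0)) := by
      calc N = ∑ f : Fin s → Fin n, (1:ℝ) := by simp [hN]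
        _ ≤ _ := Finset.sum_le_sum fun f _ => hcon f
    rw [Finset.sum_add_distrib, ← Finset.sum_div, Finset.sum_comm] at h1
    have h2 : (∑ k, ∑ f : Fin s → Fin n, (∑ a, ∑ b, h k (f a) (f b)) ^ 2) / (30 * (s:ℝ)^3) ≤ N / 2 := by
      rw [div_le_iff₀ (by positivity)]
      calc _ ≤ ∑ k : Fin 3, 5 * (s:ℝ)^3 * N := Finset.sum_le_sum fun k _ => hsm k
        _ = _ := by simp; ring
    have h3 : ∑ f : Fin s → Fin n, ∑ a, ∑ b, (if a ≠ b ∧ f a = f b then (1:ℝ) else 0) < N / 2 := by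
      have h4 : (s:ℝ)^2 * 2 < n := by
        have : s ^ 2 * 2 < n := by rw [hs]; calc _ = 2 * R ^ 4 := by ring
                                             _ < n := hn
        exact_mod_cast this
      have h5 : (n:ℝ) * ∑ f : Fin s → Fin n, ∑ a, ∑ b, (if a ≠ b ∧ f a = f b then (1:ℝ) else 0) < n * (N/2) := by
        refine hco.trans_lt ?_
        nlinarith
      exact lt_of_mul_lt_mul_left h5 hnpos.le
    linarith
  obtain ⟨f, hf⟩ := hex
  have hA : 0 ≤ (∑ k, (∑ a, ∑ b, h k (f a) (f b)) ^ 2) / (30 * (s:ℝ)^3) := by positivity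
  have hB : 0 ≤ ∑ a, ∑ b, (if a ≠ b ∧ f a = f b then (1:ℝ) else 0) := by
    refine Finset.sum_nonneg fun x _ => Finset.sum_nonneg fun y _ => ?_
    split_ifs <;> norm_num
  refine ⟨f, ?_, ?_⟩
  · intro a b hab
    by_contra hne
    have : (1:ℝ) ≤ ∑ a, ∑ b, (if a ≠ b ∧ f a = f b then (1:ℝ) else 0) := by
      calc (1:ℝ) = (if a ≠ b ∧ f a = f b then (1:ℝ) else 0) := by simp [hne, hab]
        _ ≤ ∑ b, (if a ≠ b ∧ f a = f b then (1:ℝ) else 0) := 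
            Finset.single_le_sum (f := fun b => (if a ≠ b ∧ f a = f b then (1:ℝ) else 0)) 
              (fun y _ => by positivity) (mem_univ b)
        _ ≤ _ := Finset.single_le_sum (f := fun a => ∑ b, (if a ≠ b ∧ f a = f b then (1:ℝ) else 0)) 
              (fun y _ => by positivity) (mem_univ a)
    linarith
  · intro k
    have h1 : (∑ k, (∑ a, ∑ b, h k (f a) (f b)) ^ 2) < 30 * (s:ℝ)^3 := by
      have : (∑ k, (∑ a, ∑ b, h k (f a) (f b)) ^ 2) / (30 * (s:ℝ)^3) < 1 := by linarith
      rwa [div_lt_one (by positivity)] at this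
    have h2 : (∑ a, ∑ b, h k (f a) (f b)) ^ 2 ≤ ∑ k, (∑ a, ∑ b, h k (f a) (f b)) ^ 2 :=
      Finset.single_le_sum (f := fun k => (∑ a, ∑ b, h k (f a) (f b)) ^ 2) (fun y _ => by positivity) (mem_univ k)
    have h3 : (∑ a, ∑ b, h k (f a) (f b)) ^ 2 ≤ (6 * (R:ℝ)^3)^2 := by
      have : (s:ℝ) = (R:ℝ)^2 := by rw [hs]; push_cast; rfl
      rw [this] at h1
      have : 0 < (R:ℝ)^6 := by positivity
      nlinarith
    have h4 := (abs_le_of_sq_le_sq' h3 (by positivity)).1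
    simp only [hh, Finset.sum_sub_distrib] at h4
    simp only [sum_const, card_univ, Fintype.card_fin, nsmul_eq_mul] at h4
    have h5 : (D - 6 / R) * (s:ℝ)^2 = D * (s:ℝ)^2 - 6 * (R:ℝ)^3 := by
      have : (s:ℝ) = (R:ℝ)^2 := by rw [hs]; push_cast; rfl
      rw [this]
      field_simp
    rw [h5]
    have := mul_le_mul_of_nonneg_right (hdD k) (sq_nonneg (s:ℝ))
    nlinarith

/-- The join of a graph with a complete graph on `d` vertices. -/
def joinK {V : Type*} (G : SimpleGraph V) (d : ℕ) : SimpleGraph (V ⊕ Fin d) where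
  Adj x y := x ≠ y ∧ ∀ a b, x = Sum.inl a → y = Sum.inl b → G.Adj a b
  symm := ⟨by
    intro x y h
    exact ⟨h.1.symm, fun a b ha hb => (h.2 b a hb ha).symm⟩⟩
  loopless := ⟨fun x h => h.1 rfl⟩

lemma joinK_inl {V : Type*} (G : SimpleGraph V) (d : ℕ) (a b : V) :
    (joinK G d).Adj (Sum.inl a) (Sum.inl b) ↔ G.Adj a b := by
  constructor
  · intro h
    exact h.2 a b rfl rfl
  · intro h
    refine ⟨?_, ?_⟩
    · intro he
      exact h.ne (Sum.inl.inj he)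
    · rintro a' b' ha hb
      cases ha; cases hb; exact h

lemma joinK_inr {V : Type*} (G : SimpleGraph V) (d : ℕ) (a : Fin d) (x : V ⊕ Fin d)
    (h : x ≠ Sum.inr a) :
    (joinK G d).Adj (Sum.inr a) x := by
  refine ⟨h.symm, ?_⟩
  intro a' b' ha
  cases ha

lemma berge {V : Type*} [Fintype V] [DecidableEq V] (G : SimpleGraph V) (d : ℕ)
    (hev : Even (Fintype.card V + d)) :
    (∃ (m : V → V) (W : Finset V), (∀ x ∈ W, m x ∈ W ∧ m (m x) = x ∧ G.Adj x (m x)) ∧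
      Fintype.card V ≤ W.card + d) ∨
    (∃ (U : Finset V) (c : V → Finset V), (∀ x y, x ∉ U → y ∉ U → G.Adj x y → c x = c y) ∧
      d + U.card + 1 ≤ ((Finset.univ \ U).image c).card) := by
  classical
  by_cases hpm : ∃ M : (joinK G d).Subgraph, M.IsPerfectMatching
  · left
    obtain ⟨M, hM⟩ := hpm
    rw [SimpleGraph.Subgraph.isPerfectMatching_iff] at hM
    choose p hp hpu using hM
    have hpp : ∀ v, p (p v) = v := fun v => (hpu (p v) v (hp v).symm).symm
    let m : V → V := fun x => (p (Sum.inl x)).elim id (fun _ => x)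
    let W : Finset V := univ.filter (fun x => (p (Sum.inl x)).isLeft)
    refine ⟨m, W, ?_, ?_⟩
    · intro x hx
      simp only [W, mem_filter, mem_univ, true_and, Sum.isLeft_iff] at hx
      obtain ⟨y, hy⟩ := hx
      have hm : m x = y := by simp [m, hy]
      have hyx : p (Sum.inl y) = Sum.inl x := by rw [← hy]; exact hpp _
      rw [hm]
      refine ⟨?_, ?_, ?_⟩
      · simp [W, hyx]
      · simp [m, hyx]
      · rw [← joinK_inl G d, ← hy]
        exact (hp _).adj_sub
    · have h1 : (univ \ W).card ≤ d := by
        have : (univ \ W).card ≤ (univ : Finset (Fin d)).card := by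
          let q : V → V ⊕ Fin d := fun x => p (Sum.inl x)
          have hq : ((univ \ W).image q) ⊆ (univ : Finset (Fin d)).map Function.Embedding.inr := by
            intro z hz
            simp only [mem_image, mem_sdiff, W, mem_filter, mem_univ, true_and] at hz
            obtain ⟨x, hx, rfl⟩ := hz
            simp only [Bool.not_eq_true, Sum.isLeft_eq_false, Sum.isRight_iff] at hx
            obtain ⟨y, hy⟩ := hx
            simp [q, hy]
          have hinj : Function.Injective q := by
            intro x y hxy
            have : p (p (Sum.inl x)) = p (p (Sum.inl y)) := congrArg p hxy
            rw [hpp, hpp] at this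
            exact Sum.inl.inj this
          have := card_le_card hq
          rwa [card_image_of_injective _ hinj, card_map] at this
        simpa using this
      have h2 := card_sdiff_add_card_eq_card (subset_univ W)
      rw [card_univ] at h2
      omega
  · right
    rw [SimpleGraph.tutte] at hpm
    push Not at hpm
    obtain ⟨u, hu⟩ := hpm
    unfold SimpleGraph.IsTutteViolator at hu
    set K := ((⊤ : (joinK G d).Subgraph).deleteVerts u).coe with hK
    have hmem : ∀ x, x ∉ u → x ∈ ((⊤ : (joinK G d).Subgraph).deleteVerts u).verts := by
      intro x hx
      simp [hx]
    by_cases hall : ∀ i : Fin d, Sum.inr i ∈ u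
    · let U : Finset V := univ.filter (fun x => Sum.inl x ∈ u)
      let c : V → Finset V := fun x => if hx : Sum.inl x ∈ u then ∅ else
        univ.filter (fun y => ∃ hy : Sum.inl y ∉ u, 
          K.connectedComponentMk ⟨Sum.inl y, hmem _ hy⟩ = K.connectedComponentMk ⟨Sum.inl x, hmem _ hx⟩)
      refine ⟨U, c, ?_, ?_⟩
      · intro x y hx hy hxy
        simp only [U, mem_filter, mem_univ, true_and] at hx hy
        simp only [c, hx, hy, dif_neg, not_false_eq_true]
        have : K.connectedComponentMk ⟨Sum.inl x, hmem _ hx⟩ = K.connectedComponentMk ⟨Sum.inl y, hmem _ hy⟩ := by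
          apply SimpleGraph.ConnectedComponent.sound
          apply SimpleGraph.Adj.reachable
          simp [hK, hx, hy, joinK_inl, hxy]
        rw [this]
      · have hu1 : u.ncard = d + U.card := by
          have : u = ((univ : Finset (Fin d)).map Function.Embedding.inr ∪ U.map Function.Embedding.inl : Finset (V ⊕ Fin d)) := by
            ext z
            rcases z with z | z
            · simp [U]
            · simp [hall]
          rw [this, Set.ncard_coe_finset, card_union_of_disjoint]
          · simp
          · rw [Finset.disjoint_left]
            intro z hz
            simp only [mem_map, mem_univ, true_and] at hz
            obtain ⟨y, rfl⟩ := hz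
            simp
        have hu2 : K.oddComponents.ncard ≤ ((Finset.univ \ U).image c).card := by
          have hle : K.oddComponents.ncard ≤ (Set.univ : Set K.ConnectedComponent).ncard :=
            Set.ncard_le_ncard (Set.subset_univ _) (Set.toFinite _)
          refine hle.trans ?_
          rw [← Set.ncard_coe_finset]
          let F : K.ConnectedComponent → Finset V := fun C =>
            univ.filter (fun y => ∃ hy : Sum.inl y ∉ u, K.connectedComponentMk ⟨Sum.inl y, hmem _ hy⟩ = C)
          have hrep : ∀ C : K.ConnectedComponent, ∃ x, ∃ hx : Sum.inl x ∉ u,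
              K.connectedComponentMk ⟨Sum.inl x, hmem _ hx⟩ = C := by
            intro C
            induction C using SimpleGraph.ConnectedComponent.ind with
            | h v =>
              obtain ⟨v, hv⟩ := v
              rcases v with x | i
              · exact ⟨x, by simpa using hv, rfl⟩
              · simp [hall i] at hv
          refine Set.ncard_le_ncard_of_injOn F ?_ ?_ (Set.toFinite _)
          · intro C _
            obtain ⟨x, hx, hC⟩ := hrep C
            simp only [coe_image, Set.mem_image]
            refine ⟨x, by simp [U, hx], ?_⟩
            simp only [c, F, hx, dif_neg, not_false_eq_true, hC]
          · intro C _ C' _ hCC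
            obtain ⟨x, hx, hC⟩ := hrep C
            have h1 : x ∈ F C := by simp only [F, mem_filter, mem_univ, true_and]; exact ⟨hx, hC⟩
            rw [hCC] at h1
            simp only [F, mem_filter, mem_univ, true_and] at h1
            obtain ⟨hx', hC'⟩ := h1
            rw [← hC, ← hC']
        omega
    · exfalso
      push Not at hall
      obtain ⟨i, hi⟩ := hall
      have hone : ∀ C : K.ConnectedComponent, C = K.connectedComponentMk ⟨Sum.inr i, hmem _ hi⟩ := by
        intro C
        induction C using SimpleGraph.ConnectedComponent.ind with
        | h v =>
          obtain ⟨v, hv⟩ := v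
          by_cases hvi : v = Sum.inr i
          · subst hvi; rfl
          · apply SimpleGraph.ConnectedComponent.sound
            apply SimpleGraph.Reachable.symm
            apply SimpleGraph.Adj.reachable
            have hv' : v ∉ u := by simpa using hv
            simp [hK, hi, hv', joinK_inr G d i v hvi]
      have hle : K.oddComponents.ncard ≤ 1 := by
        rw [Set.ncard_le_one (Set.toFinite _)]
        intro a _ b _
        rw [hone a, hone b]
      have h0 : u.ncard = 0 := by omega
      have h1 : K.oddComponents.ncard = 1 := by omega
      rw [Set.ncard_eq_zero (Set.toFinite _)] at h0
      have hodd := (SimpleGraph.odd_ncard_oddComponents (G := K)).1 (by rw [h1]; exact odd_one)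
      have hcard : Nat.card ((⊤ : (joinK G d).Subgraph).deleteVerts u).verts = Fintype.card V + d := by
        rw [h0]
        simp
      rw [hcard] at hodd
      exact (Nat.not_odd_iff_even.2 hev) hodd

lemma num_core (a1 b1 a2 b2 m3 : ℝ) (ha1 : 0 ≤ a1) (hb1 : 0 ≤ b1) (ha2 : 0 ≤ a2) (hb2 : 0 ≤ b2)
    (hsum : (a1 + b1 / 2) + (a2 + b2 / 2) + m3 ≤ 1)
    (h12 : a1 + b1 / 2 ≤ a2 + b2 / 2) (h23 : a2 + b2 / 2 ≤ m3) :
    a1 + a2 - a1 * a2 + b1 * b2 ≤ 5 / 9 := by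
  obtain ⟨u, hu⟩ : ∃ u, u = a1 + b1 / 2 := ⟨_, rfl⟩
  obtain ⟨v, hv⟩ : ∃ v, v = a2 + b2 / 2 := ⟨_, rfl⟩
  have eb1 : b1 = 2 * (u - a1) := by linarith
  have eb2 : b2 = 2 * (v - a2) := by linarith
  rw [← hu, ← hv] at h12 hsum
  rw [← hv] at h23
  subst eb1 eb2
  have hu0 : 0 ≤ u := by linarith
  have hu3 : u ≤ 1 / 3 := by linarith
  have hv2 : v ≤ (1 - u) / 2 := by linarith
  have hau : a1 ≤ u := by linarith
  have hav : a2 ≤ v := by linarith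
  by_cases hs : 0 ≤ 1 - a2 - 4 * (v - a2)
  · have h1 : a1 * (1 - a2 - 4 * (v - a2)) ≤ u * (1 - a2 - 4 * (v - a2)) :=
      mul_le_mul_of_nonneg_right hau hs
    have h2 : (1 - u) * a2 ≤ (1 - u) * v := mul_le_mul_of_nonneg_left hav (by linarith)
    have h3 : (1 - u) * v ≤ (1 - u) * ((1 - u) / 2) := mul_le_mul_of_nonneg_left hv2 (by linarith)
    nlinarith
  · have h1 : a1 * (1 - a2 - 4 * (v - a2)) ≤ 0 := by nlinarith
    have h4 : u * v ≤ u * ((1 - u) / 2) := mul_le_mul_of_nonneg_left hv2 hu0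
    have h5 : u * v ≤ 1 / 9 := by nlinarith
    by_cases h6 : 4 * u ≤ 1
    · nlinarith
    · nlinarith

lemma num_one (a b : Fin 3 → ℝ) (ha : ∀ i, 0 ≤ a i) (hb : ∀ i, 0 ≤ b i)
    (hsum : ∑ i, (a i + b i / 2) ≤ 1) :
    ∃ k : Fin 3, a (k + 1) + a (k + 2) - a (k + 1) * a (k + 2) + b (k + 1) * b (k + 2) ≤ 5 / 9 := by
  rw [Fin.sum_univ_three] at hsum
  have key : ∀ i j k : Fin 3, (a i + b i / 2) + (a j + b j / 2) + (a k + b k / 2) ≤ 1 → 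
      a i + b i / 2 ≤ a k + b k / 2 → a j + b j / 2 ≤ a k + b k / 2 → 
      a i + a j - a i * a j + b i * b j ≤ 5 / 9 := by
    intro i j k hs hi hj
    rcases le_total (a i + b i / 2) (a j + b j / 2) with h | h
    · exact num_core _ _ _ _ _ (ha i) (hb i) (ha j) (hb j) hs h hj
    · have := num_core _ _ _ _ (a k + b k / 2) (ha j) (hb j) (ha i) (hb i) (by linarith) h hi
      linarith
  by_cases h2 : a 0 + b 0 / 2 ≤ a 2 + b 2 / 2 ∧ a 1 + b 1 / 2 ≤ a 2 + b 2 / 2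
  · exact ⟨2, key 0 1 2 (by linarith) h2.1 h2.2⟩
  by_cases h1 : a 0 + b 0 / 2 ≤ a 1 + b 1 / 2 ∧ a 2 + b 2 / 2 ≤ a 1 + b 1 / 2
  · exact ⟨1, key 2 0 1 (by linarith) h1.2 h1.1⟩
  · refine ⟨0, key 1 2 0 (by linarith) ?_ ?_⟩
    · by_contra hc
      push Not at hc
      rcases le_total (a 2 + b 2 / 2) (a 1 + b 1 / 2) with h | h
      · exact h1 ⟨hc.le, h⟩
      · exact h2 ⟨by linarith, h⟩
    · by_contra hc
      push Not at hc
      rcases le_total (a 2 + b 2 / 2) (a 1 + b 1 / 2) with h | h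
      · exact h1 ⟨by linarith, h⟩
      · exact h2 ⟨hc.le, h⟩

lemma num_eta (a b : Fin 3 → ℝ) (η : ℝ) (h0 : 0 ≤ η) (h1 : η ≤ 1) (ha : ∀ i, 0 ≤ a i) (hb : ∀ i, 0 ≤ b i)
    (hsum : ∑ i, (a i + b i / 2) ≤ 1 + η) :
    ∃ k : Fin 3, a (k + 1) + a (k + 2) - a (k + 1) * a (k + 2) + b (k + 1) * b (k + 2) ≤ 5 / 9 + 2 * η := by
  have ht : (0:ℝ) < 1 + η := by linarith
  obtain ⟨k, hk⟩ := num_one (fun i => a i / (1 + η)) (fun i => b i / (1 + η))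
    (fun i => div_nonneg (ha i) ht.le) (fun i => div_nonneg (hb i) ht.le) (by
      have : ∑ i, (a i / (1 + η) + b i / (1 + η) / 2) = (∑ i, (a i + b i / 2)) / (1 + η) := by
        rw [Finset.sum_div]
        refine Finset.sum_congr rfl fun i _ => by ring
      rw [this, div_le_one ht]
      exact hsum)
  refine ⟨k, ?_⟩
  obtain ⟨x, hx⟩ : ∃ x, x = a (k+1) / (1 + η) := ⟨_, rfl⟩
  obtain ⟨y, hy⟩ : ∃ y, y = a (k+2) / (1 + η) := ⟨_, rfl⟩
  obtain ⟨z, hz⟩ : ∃ z, z = b (k+1) / (1 + η) := ⟨_, rfl⟩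
  obtain ⟨w, hw⟩ : ∃ w, w = b (k+2) / (1 + η) := ⟨_, rfl⟩
  simp only [← hx, ← hy, ← hz, ← hw] at hk
  have ex : a (k+1) = (1 + η) * x := by rw [hx]; field_simp
  have ey : a (k+2) = (1 + η) * y := by rw [hy]; field_simp
  have ez : b (k+1) = (1 + η) * z := by rw [hz]; field_simp
  have ew : b (k+2) = (1 + η) * w := by rw [hw]; field_simp
  have hx0 : 0 ≤ x := by rw [hx]; exact div_nonneg (ha _) ht.le
  have hy0 : 0 ≤ y := by rw [hy]; exact div_nonneg (ha _) ht.le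
  rw [ex, ey, ez, ew]
  have h2 : (1+η)^2 * (x + y - x * y + z * w) ≤ (1+η)^2 * (5/9) :=
    mul_le_mul_of_nonneg_left hk (by positivity)
  have h3 : 0 ≤ η * (1 + η) * (x + y) := by positivity
  nlinarith

lemma card_by_class {s : ℕ} (U : Finset (Fin s × Fin 3)) :
    U.card = ∑ i : Fin 3, (univ.filter (fun a : Fin s => (a, i) ∈ U)).card := by
  simp only [card_filter]
  rw [← Fintype.sum_prod_type_right (f := fun x : Fin s × Fin 3 => if x ∈ U then 1 else 0)]
  simp

lemma fin3_shift (i : Fin 3) : i + 1 + 1 = i + 2 ∧ i + 1 + 2 = i ∧ i + 2 + 1 = i ∧ i + 2 + 2 = i + 1 ∧ i + 1 ≠ i ∧ i + 2 ≠ i ∧ i + 1 ≠ i + 2 := by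
  revert i; decide

/-- the tripartite graph given by three bipartite relations -/
def triG {s : ℕ} (g : Fin 3 → Fin s → Fin s → Prop) : SimpleGraph (Fin s × Fin 3) where
  Adj x y := (y.2 = x.2 + 1 ∧ g (x.2 + 2) x.1 y.1) ∨ (x.2 = y.2 + 1 ∧ g (y.2 + 2) y.1 x.1)
  symm := ⟨fun x y h => h.symm⟩
  loopless := ⟨by
    rintro x (h | h)
    · exact (fin3_shift x.2).2.2.2.2.1 h.1.symm
    · exact (fin3_shift x.2).2.2.2.2.1 h.1.symm⟩

lemma graph_matching {R s : ℕ} (hR : 2 ≤ R) (hs : s = R ^ 2) (g : Fin 3 → Fin s → Fin s → Prop)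
    [∀ k x y, Decidable (g k x y)]
    (hg : ∀ k, (5 / 9 + 8 / R) * (s:ℝ) ^ 2 ≤ ∑ a, ∑ b, (if g k a b then (1:ℝ) else 0)) :
    ∃ (N : Finset (Fin s × Fin 3)) (m : Fin s × Fin 3 → Fin s),
      s + 1 ≤ N.card ∧ (∀ x ∈ N, g (x.2 + 2) x.1 (m x)) ∧
      (∀ x ∈ N, ∀ y ∈ N, x ≠ (m y, y.2 + 1)) ∧
      (∀ x ∈ N, ∀ y ∈ N, x ≠ y → (m x, x.2 + 1) ≠ (m y, y.2 + 1)) := by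
  classical
  have hR1 : (2:ℝ) ≤ R := by exact_mod_cast hR
  have hRpos : (0:ℝ) < R := by linarith
  have hs4 : 4 ≤ s := by nlinarith
  have hsR : (s:ℝ) = (R:ℝ)^2 := by rw [hs]; push_cast; rfl
  have hspos : (0:ℝ) < s := by rw [hsR]; positivity
  have hcV : Fintype.card (Fin s × Fin 3) = 3 * s := by simp [mul_comm]
  have hev : Even (Fintype.card (Fin s × Fin 3) + (s - 2)) := by
    rw [hcV, Nat.even_iff]
    omega
  rcases berge (triG g) (s - 2) hev with ⟨p, W, hW, hWc⟩ | ⟨U, c, hc, hcc⟩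
  · rw [hcV] at hWc
    let N := W.filter (fun x => (p x).2 = x.2 + 1)
    let N' := W.filter (fun x => ¬ (p x).2 = x.2 + 1)
    have hNN : N.card + N'.card = W.card := Finset.card_filter_add_card_filter_not _
    have hN' : N'.card ≤ N.card := by
      apply Finset.card_le_card_of_injOn p
      · intro x hx
        simp only [N', coe_filter, Set.mem_ofPred_eq] at hx
        obtain ⟨hx1, hx2⟩ := hx
        obtain ⟨h1, h2, h3⟩ := hW x hx1
        simp only [N, coe_filter, Set.mem_ofPred_eq]
        refine ⟨h1, ?_⟩
        rw [h2]
        rcases h3 with h3 | h3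
        · exact absurd h3.1 hx2
        · exact h3.1
      · intro x hx y hy hxy
        simp only [N', coe_filter, Set.mem_ofPred_eq] at hx hy
        rw [← (hW x hx.1).2.1, ← (hW y hy.1).2.1, hxy]
    have hpx : ∀ x ∈ N, ((p x).1, x.2 + 1) = p x := by
      intro x hx
      simp only [N, mem_filter] at hx
      rw [← hx.2]
    refine ⟨N, fun x => (p x).1, by omega, ?_, ?_, ?_⟩
    · intro x hx
      simp only [N, mem_filter] at hx
      obtain ⟨h1, h2, h3⟩ := hW x hx.1
      rcases h3 with h3 | h3
      · exact h3.2
      · exfalso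
        rw [hx.2] at h3
        have := fin3_shift x.2
        rw [this.1] at h3
        exact this.2.2.2.2.2.1 h3.1.symm
    · intro x hx y hy hxy
      rw [hpx y hy] at hxy
      simp only [N, mem_filter] at hx hy
      have h1 := (hW y hy.1).2.1
      rw [← hxy] at h1
      have h2 := hx.2
      rw [h1] at h2
      have h3 := hy.2
      rw [← hxy, h2] at h3
      have := fin3_shift x.2
      rw [this.1] at h3
      exact this.2.2.2.2.2.1 h3.symm
    · intro x hx y hy hne hxy
      rw [hpx x hx, hpx y hy] at hxy
      simp only [N, mem_filter] at hx hy
      apply hne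
      rw [← (hW x hx.1).2.1, ← (hW y hy.1).2.1, hxy]
  · exfalso
    let Vc := (univ : Finset (Fin s × Fin 3)) \ U
    let sz : Fin s × Fin 3 → ℕ := fun x => (Vc.filter (fun y => c y = c x)).card
    let B := Vc.filter (fun x => R ≤ sz x)
    let Sm := Vc.filter (fun x => ¬ R ≤ sz x)
    have e1 : B.card + Sm.card = Vc.card := Finset.card_filter_add_card_filter_not _
    have e2 : Vc.card + U.card = 3 * s := by
      rw [← hcV, ← card_univ]; exact card_sdiff_add_card_eq_card (subset_univ U)
    have e3 : (Vc.image c).card ≤ Sm.card + (B.image c).card := by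
      have : Vc.image c ⊆ Sm.image c ∪ B.image c := by
        rw [← image_union]
        apply image_subset_image
        intro x hx
        simp only [mem_union, Sm, B, mem_filter, hx, true_and]
        tauto
      refine (card_le_card this).trans ((card_union_le _ _).trans ?_)
      gcongr
      exact card_image_le
    have e4 : R * (B.image c).card ≤ B.card := by
      apply Finset.mul_card_image_le_card
      intro l hl
      simp only [mem_image] at hl
      obtain ⟨x, hx, rfl⟩ := hl
      have hx' := hx
      simp only [B, mem_filter] at hx
      refine hx.2.trans ?_
      apply card_le_card
      intro y hy
      simp only [mem_filter] at hy
      simp only [B, mem_filter]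
      refine ⟨⟨hy.1, ?_⟩, hy.2⟩
      simp only [sz, hy.2]
      exact hx.2
    have e5 : (B.image c).card ≤ 3 * R := by
      have : R * (B.image c).card ≤ R * (3 * R) := by
        calc _ ≤ B.card := e4
          _ ≤ 3 * s := by omega
          _ = R * (3 * R) := by rw [hs]; ring
      exact Nat.le_of_mul_le_mul_left this (by omega)
    have hcc' : s - 2 + U.card + 1 ≤ (Vc.image c).card := hcc
    have e6 : 2 * U.card + B.card ≤ 2 * s + 1 + 3 * R := by omega
    let A : Fin 3 → Finset (Fin s) := fun i => univ.filter (fun a => (a, i) ∈ U)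
    let Bi : Fin 3 → Finset (Fin s) := fun i => univ.filter (fun a => (a, i) ∈ B)
    have eU : U.card = ∑ i, (A i).card := card_by_class U
    have eB : B.card = ∑ i, (Bi i).card := card_by_class B
    obtain ⟨k, hk⟩ := num_eta (fun i => (A i).card / (s:ℝ)) (fun i => (Bi i).card / (s:ℝ)) (2 / R)
      (by positivity) (by rw [div_le_one hRpos]; exact hR1) (fun i => by positivity) (fun i => by positivity) (by
        have : ∑ i, ((A i).card / (s:ℝ) + (Bi i).card / (s:ℝ) / 2) = (2 * U.card + B.card) / (2 * s) := by
          rw [eU, eB]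
          push_cast
          rw [Finset.sum_add_distrib, ← Finset.sum_div, ← Finset.sum_div, ← Finset.sum_div]
          field_simp
        rw [this, div_le_iff₀ (by positivity)]
        have e7 : (2 * U.card + B.card : ℝ) ≤ 2 * s + 1 + 3 * R := by exact_mod_cast e6
        refine e7.trans ?_
        rw [hsR]
        field_simp
        nlinarith)
    have hcount : ∑ a, ∑ b, (if g k a b then (1:ℝ) else 0) ≤
        (s:ℝ)^2 - (s - (A (k+1)).card) * (s - (A (k+2)).card) + (Bi (k+1)).card * (Bi (k+2)).card + s * R := by
      have hrow : ∀ a : Fin s, ∑ b, (if g k a b then (1:ℝ) else 0) ≤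
          ∑ b, ((1 - (if a ∈ A (k+1) then 0 else 1) * (if b ∈ A (k+2) then 0 else 1)) + 
            (if a ∈ Bi (k+1) then 1 else 0) * (if b ∈ Bi (k+2) then (1:ℝ) else 0)) + R := by
        intro a
        have hsm : ∑ b, (if (a, k+1) ∈ Sm ∧ (b, k+2) ∈ Vc ∧ c (b, k+2) = c (a, k+1) then (1:ℝ) else 0) ≤ R := by
          by_cases ha : (a, k+1) ∈ Sm
          · simp only [ha, true_and, sum_boole]
            have h1 : ¬ R ≤ sz (a, k+1) := by
              simp only [Sm, mem_filter] at ha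
              exact ha.2
            have h2 : (univ.filter (fun b : Fin s => (b, k+2) ∈ Vc ∧ c (b, k+2) = c (a, k+1))).card ≤ sz (a, k+1) := by
              apply Finset.card_le_card_of_injOn (fun b => (b, k+2))
              · intro b hb
                simpa using hb
              · intro b _ b' _ h
                simpa using h
            have h3 : (univ.filter (fun b : Fin s => (b, k+2) ∈ Vc ∧ c (b, k+2) = c (a, k+1))).card ≤ R := by omega
            exact_mod_cast h3
          · simp [ha]
        refine le_trans ?_ (add_le_add_right hsm _)
        rw [← Finset.sum_add_distrib]
        refine Finset.sum_le_sum fun b _ => ?_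
        by_cases hgab : g k a b
        · simp only [hgab, if_true]
          by_cases ha : (a, k+1) ∈ U
          · have : a ∈ A (k+1) := by simp [A, ha]
            simp only [this, if_true]
            split_ifs <;> norm_num
          by_cases hb : (b, k+2) ∈ U
          · have : b ∈ A (k+2) := by simp [A, hb]
            simp only [this, if_true]
            split_ifs <;> norm_num
          have hadj : (triG g).Adj (a, k+1) (b, k+2) := by
            left
            simp only
            refine ⟨(fin3_shift k).1.symm, ?_⟩
            rw [(fin3_shift k).2.1]
            exact hgab
          have hcab := hc _ _ ha hb hadj
          have haV : (a, k+1) ∈ Vc := by simp [Vc, ha]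
          have hbV : (b, k+2) ∈ Vc := by simp [Vc, hb]
          by_cases hl : R ≤ sz (a, k+1)
          · have h1 : a ∈ Bi (k+1) := by simp [Bi, B, haV, hl]
            have h2 : b ∈ Bi (k+2) := by
              have : R ≤ sz (b, k+2) := by simp only [sz, ← hcab]; exact hl
              simp [Bi, B, hbV, this]
            simp only [h1, h2, if_true]
            split_ifs <;> norm_num
          · have h1 : (a, k+1) ∈ Sm := by simp only [Sm, mem_filter]; exact ⟨haV, hl⟩
            simp only [h1, hbV, hcab, true_and, if_true]
            split_ifs <;> norm_num
        · simp only [hgab, if_false]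
          split_ifs <;> norm_num
      refine (Finset.sum_le_sum fun a _ => hrow a).trans ?_
      have hne : ∀ S : Finset (Fin s), ∑ a, (if a ∈ S then (0:ℝ) else 1) = s - S.card := by
        intro S
        have : ∀ a, (if a ∈ S then (0:ℝ) else 1) = 1 - (if a ∈ S then (1:ℝ) else 0) := by
          intro a; split_ifs <;> norm_num
        simp only [this, Finset.sum_sub_distrib]
        simp
      have hpo : ∀ S : Finset (Fin s), ∑ a, (if a ∈ S then (1:ℝ) else 0) = S.card := by
        intro S; simp
      simp only [Finset.sum_add_distrib, Finset.sum_sub_distrib, ← Finset.mul_sum, ← Finset.sum_mul, hne, hpo]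
      simp
      apply le_of_eq; ring
    have hgk := (hg k).trans hcount
    have hk2 : (s:ℝ)^2 - (s - (A (k+1)).card) * (s - (A (k+2)).card) + (Bi (k+1)).card * (Bi (k+2)).card
       ≤ (5/9 + 4 / R) * (s:ℝ)^2 := by
      have := mul_le_mul_of_nonneg_right hk (sq_nonneg (s:ℝ))
      calc _ = (((A (k+1)).card : ℝ) / s + (A (k+2)).card / s - (A (k+1)).card / s * ((A (k+2)).card / s) + (Bi (k+1)).card / s * ((Bi (k+2)).card / s)) * (s:ℝ)^2 := by
            field_simp
            ring
        _ ≤ _ := this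
        _ = _ := by ring
    have hsr : (s:ℝ) * R = (1 / R) * (s:ℝ)^2 := by
      rw [hsR]; field_simp
    have hpos : 0 < (1 / R) * (s:ℝ)^2 := by positivity
    have e8 : (5 / 9 + 8 / R) * (s:ℝ)^2 = (5/9) * (s:ℝ)^2 + 8 * ((1 / R) * (s:ℝ)^2) := by ring
    have e9 : (5 / 9 + 4 / R) * (s:ℝ)^2 = (5/9) * (s:ℝ)^2 + 4 * ((1 / R) * (s:ℝ)^2) := by ring
    linarith

lemma fin3_cases : ∀ k c : Fin 3, c = k ∨ c = k + 1 ∨ c = k + 2 := by decide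

/-- the triple with entry `z` in class `k`, `u` in class `k+1`, `v` in class `k+2` -/
def mk3 {n : ℕ} (k : Fin 3) (u v z : Fin n) : Fin 3 → Fin n :=
  fun c => if c = k then z else if c = k + 1 then u else v

lemma deg_count {n : ℕ} (H : Finset (Fin 3 → Fin n)) (k : Fin 3) (z : Fin n) :
    (deg3 H k z : ℝ) = ∑ u, ∑ v, (if mk3 k u v z ∈ H then (1:ℝ) else 0) := by
  classical
  unfold deg3
  rw [← Fintype.sum_prod_type' (f := fun u v => if mk3 k u v z ∈ H then (1:ℝ) else 0), sum_boole]
  norm_cast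
  apply Finset.card_bij' (fun e _ => (e (k+1), e (k+2))) (fun p _ => mk3 k p.1 p.2 z)
  · intro e he
    simp only [mem_filter] at he
    simp only [mem_filter, mem_univ, true_and]
    convert he.1 using 1
    ext c
    have := fin3_cases k c
    have hk := fin3_shift k
    rcases this with rfl | rfl | rfl
    · simp [mk3, he.2]
    · simp [mk3]
    · simp [mk3]
  · intro p hp
    simp only [mem_filter, mem_univ, true_and] at hp
    simp only [mem_filter, hp, true_and]
    simp [mk3]
  · intro e he
    simp only [mem_filter] at he
    ext c
    have := fin3_cases k c
    have hk := fin3_shift k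
    rcases this with rfl | rfl | rfl
    · simp [mk3, he.2]
    · simp [mk3]
    · simp [mk3]
  · intro p hp
    have hk := fin3_shift k
    simp [mk3]

lemma exists_inj_choice {ι α : Type*} [Fintype ι] [DecidableEq α] (t : ι → Finset α)
    (ht : ∀ i, Fintype.card ι ≤ (t i).card) : 
    ∃ f : ι → α, Function.Injective f ∧ ∀ i, f i ∈ t i := by
  classical
  rw [← Finset.all_card_le_biUnion_card_iff_exists_injective]
  intro S
  rcases S.eq_empty_or_nonempty with rfl | ⟨i, hi⟩
  · simp
  · calc S.card ≤ Fintype.card ι := card_le_univ S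
      _ ≤ (t i).card := ht i
      _ ≤ _ := card_le_card (subset_biUnion_of_mem t hi)

lemma exists_labels {n : ℕ} (M : Finset (Fin 3 → Fin n))
    (hM : ∀ e ∈ M, ∀ f ∈ M, e ≠ f → ∀ i, e i ≠ f i) :
    ∃ (P : Finset (Fin n)) (σ : Fin 3 → Fin n → Fin n), P.card = M.card ∧
      (∀ i, Function.Bijective (σ i)) ∧ ∀ x ∈ P, (fun i => σ i x) ∈ M := by
  classical
  have hcard : M.card ≤ n := by
    have : M.card ≤ (univ : Finset (Fin n)).card := by
      apply Finset.card_le_card_of_injOn (fun e => e 0) (fun _ _ => by simp)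
      intro e he f hf hef
      by_contra hne
      exact hM e he f hf hne 0 hef
    simpa using this
  let E : Fin n → (Fin 3 → Fin n) := fun x => 
    if h : x.val < M.card then (M.equivFin.symm ⟨x.val, h⟩).1 else fun _ => x
  let P : Finset (Fin n) := univ.filter (fun x => x.val < M.card)
  have hEM : ∀ x ∈ P, E x ∈ M := by
    intro x hx
    simp only [P, mem_filter, mem_univ, true_and] at hx
    simp [E, hx]
  have hEinj : ∀ x ∈ P, ∀ y ∈ P, E x = E y → x = y := by
    intro x hx y hy hxy
    simp only [P, mem_filter, mem_univ, true_and] at hx hy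
    simp only [E, hx, hy, dif_pos] at hxy
    have := M.equivFin.symm.injective (Subtype.ext hxy)
    simpa [Fin.ext_iff] using this
  have hσ : ∀ i : Fin 3, ∃ τ : Fin n → Fin n, Function.Bijective τ ∧ ∀ x ∈ P, τ x = E x i := by
    intro i
    obtain ⟨g, hg⟩ := Finset.exists_equiv_extend_of_card_eq (α := Fin n) (t := (univ : Finset (Fin n))) 
      (by simp) (s := P) (f := fun x => E x i) (by simp) (by
        intro x hx y hy hxy
        apply hEinj x hx y hy
        by_contra hne
        exact hM _ (hEM x hx) _ (hEM y hy) hne i hxy)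
    refine ⟨fun x => (g x).1, ?_, hg⟩
    apply Finite.injective_iff_bijective.1
    intro x y hxy
    exact g.injective (Subtype.ext hxy)
  choose σ hσ1 hσ2 using hσ
  refine ⟨P, σ, ?_, hσ1, ?_⟩
  · have : P.card = (univ : Finset (Fin M.card)).card := by
      symm
      apply Finset.card_bij (fun x _ => Fin.castLE hcard x)
      · intro x _; simp [P]
      · intro x _ y _ h; simpa [Fin.ext_iff] using h
      · intro y hy
        simp only [P, mem_filter, mem_univ, true_and] at hy
        exact ⟨⟨y.val, hy⟩, mem_univ _, by simp⟩
    simpa using this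
  · intro x hx
    have : (fun i => σ i x) = E x := funext fun i => hσ2 i x hx
    rw [this]
    exact hEM x hx

lemma aug {n R : ℕ} (hR : 2 ≤ R) (hn : 2 * R ^ 4 < n) (H M : Finset (Fin 3 → Fin n))
    (hMH : M ⊆ H) (hM : ∀ e ∈ M, ∀ f ∈ M, e ≠ f → ∀ i, e i ≠ f i)
    (L : Fin 3 → Finset (Fin n)) (hL : ∀ k, ∀ z ∈ L k, ∀ e ∈ M, e k ≠ z)
    (hLc : ∀ k, 4 * R ^ 3 ≤ (L k).card)
    (hdeg : ∀ k, ∀ z ∈ L k, (5 / 9 + 15 / R) * (n:ℝ) ^ 2 ≤ (deg3 H k z : ℝ)) :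
    ∃ M' : Finset (Fin 3 → Fin n), M' ⊆ H ∧
      (∀ e ∈ M', ∀ f ∈ M', e ≠ f → ∀ i, e i ≠ f i) ∧ M.card < M'.card := by
  classical
  have hRpos : (0:ℝ) < R := by exact_mod_cast (by omega : 0 < R)
  obtain ⟨P, σ, hPc, hσ, hPM⟩ := exists_labels M hM
  obtain ⟨s, hs⟩ : ∃ s, s = R ^ 2 := ⟨_, rfl⟩
  let Z : Fin 3 → Fin n → Fin n → Finset (Fin n) := fun k x y =>
    (L k).filter (fun z => mk3 k (σ (k+1) x) (σ (k+2) y) z ∈ H)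
  let g : Fin 3 → Fin n → Fin n → Prop := fun k x y => 4 * s ≤ (Z k x y).card
  have hg : ∀ k, (5 / 9 + 14 / R) * (n:ℝ)^2 ≤ ∑ x, ∑ y, (if g k x y then (1:ℝ) else 0) := by
    intro k
    have hLpos : (0:ℝ) < (L k).card := by
      have := hLc k
      have : 0 < R ^ 3 := by positivity
      exact_mod_cast (by omega : 0 < (L k).card)
    have h1 : ((L k).card : ℝ) * ((5 / 9 + 15 / R) * (n:ℝ) ^ 2) ≤ ∑ z ∈ L k, (deg3 H k z : ℝ) := by
      rw [← nsmul_eq_mul]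
      exact Finset.card_nsmul_le_sum _ _ _ (hdeg k)
    have h2 : ∑ z ∈ L k, (deg3 H k z : ℝ) = ∑ x, ∑ y, ((Z k x y).card : ℝ) := by
      simp only [deg_count]
      rw [Finset.sum_comm, ← (hσ (k+1)).sum_comp]
      refine Finset.sum_congr rfl fun x _ => ?_
      rw [Finset.sum_comm, ← (hσ (k+2)).sum_comp]
      refine Finset.sum_congr rfl fun y _ => ?_
      rw [sum_boole]
    have h3 : ∑ x, ∑ y, ((Z k x y).card : ℝ) ≤ 
        ∑ x, ∑ y, ((if g k x y then (1:ℝ) else 0) * (L k).card + 4 * s) := by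
      refine Finset.sum_le_sum fun x _ => Finset.sum_le_sum fun y _ => ?_
      by_cases h : g k x y
      · simp only [h, if_true, one_mul]
        have : ((Z k x y).card : ℝ) ≤ (L k).card := by exact_mod_cast card_filter_le _ _
        have : (0:ℝ) ≤ s := by positivity
        linarith
      · simp only [h, if_false, zero_mul, zero_add]
        have h' : (Z k x y).card ≤ 4 * s := by
          simp only [g] at h; omega
        exact_mod_cast h'
    have h4 : ∑ x, ∑ y, ((if g k x y then (1:ℝ) else 0) * (L k).card + 4 * s) = 
        (∑ x, ∑ y, (if g k x y then (1:ℝ) else 0)) * (L k).card + 4 * s * (n:ℝ)^2 := by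
      simp only [Finset.sum_add_distrib, ← Finset.sum_mul]
      simp
      ring
    have h5 : 4 * (s:ℝ) ≤ (L k).card * (1 / R) := by
      have : (4 * (R:ℝ)^3) ≤ (L k).card := by exact_mod_cast hLc k
      rw [hs]
      push_cast
      rw [mul_one_div, le_div_iff₀ hRpos]
      linarith
    have h6 : ((L k).card : ℝ) * ((5 / 9 + 15 / R) * (n:ℝ) ^ 2) ≤ 
       (∑ x, ∑ y, (if g k x y then (1:ℝ) else 0)) * (L k).card + (L k).card * (1 / R) * (n:ℝ)^2 := by
      have : 4 * s * (n:ℝ)^2 ≤ (L k).card * (1 / R) * (n:ℝ)^2 := mul_le_mul_of_nonneg_right h5 (by positivity)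
      linarith
    have h7 : ((L k).card : ℝ) * ((5 / 9 + 14 / R) * (n:ℝ) ^ 2) ≤ 
       (L k).card * (∑ x, ∑ y, (if g k x y then (1:ℝ) else 0)) := by
      have e : ((L k).card : ℝ) * ((5 / 9 + 14 / R) * (n:ℝ) ^ 2) = ((L k).card : ℝ) * ((5 / 9 + 15 / R) * (n:ℝ) ^ 2) - (L k).card * (1 / R) * (n:ℝ)^2 := by ring
      linarith
    exact le_of_mul_le_mul_left h7 hLpos
  obtain ⟨f, hfinj, hf⟩ := sampling (by omega) hs hn _ g hg
  obtain ⟨N, m, hNc, hNg, hN1, hN2⟩ := graph_matching hR hs (fun k a b => g k (f a) (f b)) (by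
    intro k
    refine le_trans (le_of_eq ?_) (hf k)
    ring)
  have hN3 : N.card ≤ 3 * s := by
    have := card_le_univ N
    simpa [mul_comm] using this
  obtain ⟨ζ, hζi, hζ⟩ := exists_inj_choice (ι := N) (fun y => 
    Z (y.1.2 + 2) (f y.1.1) (f (m y.1)) \ univ.image (fun a => σ (y.1.2 + 2) (f a))) (by
      intro y
      have h1 := hNg y.1 y.2
      simp only [g] at h1
      have h2 := le_card_sdiff (univ.image (fun a => σ (y.1.2 + 2) (f a))) (Z (y.1.2 + 2) (f y.1.1) (f (m y.1)))
      have h3 : (univ.image (fun a => σ (y.1.2 + 2) (f a))).card ≤ s := by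
        refine card_image_le.trans ?_
        simp
      simp only [Fintype.card_coe]
      omega)
  let Pf := P \ univ.image f
  let F : Pf ⊕ N → (Fin 3 → Fin n) := fun j => match j with
    | Sum.inl x => fun c => σ c x.1
    | Sum.inr y => mk3 (y.1.2 + 2) (σ y.1.2 (f y.1.1)) (σ (y.1.2 + 1) (f (m y.1))) (ζ y)
  have hFH : ∀ j, F j ∈ H := by
    rintro (x | y)
    · have hx := x.2
      simp only [Pf, mem_sdiff] at hx
      exact hMH (hPM x.1 hx.1)
    · have hy := hζ y
      simp only [Z, mem_sdiff, mem_filter] at hy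
      have h := hy.1.2
      rw [(fin3_shift y.1.2).2.2.1, (fin3_shift y.1.2).2.2.2.1] at h
      exact h
  have hFr : ∀ (y : N) (c : Fin 3), (y.1.2 = c ∧ F (Sum.inr y) c = σ c (f y.1.1)) ∨
      (y.1.2 + 1 = c ∧ F (Sum.inr y) c = σ c (f (m y.1))) ∨ (y.1.2 + 2 = c ∧ F (Sum.inr y) c = ζ y) := by
    intro y c
    have hi := fin3_shift y.1.2
    generalize hyi : y.1.2 = i at *
    have := fin3_cases i c
    rcases this with rfl | rfl | rfl
    · left
      refine ⟨rfl, ?_⟩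
      simp only [F, mk3, hyi]
      rw [if_neg hi.2.2.2.2.2.1.symm, if_pos hi.2.2.1.symm]
    · right; left
      refine ⟨rfl, ?_⟩
      simp only [F, mk3, hyi]
      rw [if_neg hi.2.2.2.2.2.2, if_neg (by rw [hi.2.2.1]; exact hi.2.2.2.2.1)]
    · right; right
      refine ⟨rfl, ?_⟩
      simp only [F, mk3, hyi]
      simp
  have hζL : ∀ y : N, ζ y ∈ L (y.1.2 + 2) := by
    intro y
    have hy := hζ y
    simp only [Z, mem_sdiff, mem_filter] at hy
    exact hy.1.1
  have hζS : ∀ (y : N) (a : Fin s), ζ y ≠ σ (y.1.2 + 2) (f a) := by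
    intro y a h
    have hy := hζ y
    simp only [mem_sdiff, mem_image, mem_univ, true_and, not_exists] at hy
    exact hy.2 a h.symm
  have hlr : ∀ (x : Pf) (y : N) (c : Fin 3), F (Sum.inl x) c ≠ F (Sum.inr y) c := by
    intro x y c h
    have hx := x.2
    simp only [Pf, mem_sdiff, mem_image, mem_univ, true_and, not_exists] at hx
    have hl : F (Sum.inl x) c = σ c x.1 := rfl
    rw [hl] at h
    rcases hFr y c with ⟨_, h2⟩ | ⟨_, h2⟩ | ⟨h1, h2⟩
    · rw [h2] at h
      exact hx.2 _ ((hσ c).1 h).symm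
    · rw [h2] at h
      exact hx.2 _ ((hσ c).1 h).symm
    · rw [h2] at h
      have h3 := hL _ _ (hζL y) _ (hPM x.1 hx.1)
      rw [h1] at h3
      exact h3 h
  have hdis : ∀ i j, i ≠ j → ∀ c, F i c ≠ F j c := by
    rintro (x | y) (x' | y') hne c h
    · apply hne
      have : σ c x.1 = σ c x'.1 := h
      rw [Subtype.ext ((hσ c).1 this)]
    · exact hlr x y' c h
    · exact hlr x' y c h.symm
    · have hyy : y ≠ y' := fun h => hne (by rw [h])
      have hyy' : y.1 ≠ y'.1 := fun h => hyy (Subtype.ext h)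
      rcases hFr y c with ⟨h1, h2⟩ | ⟨h1, h2⟩ | ⟨h1, h2⟩ <;>
      rcases hFr y' c with ⟨h1', h2'⟩ | ⟨h1', h2'⟩ | ⟨h1', h2'⟩ <;> rw [h2, h2'] at h
      · exact hyy' (Prod.ext (hfinj ((hσ c).1 h)) (h1.trans h1'.symm))
      · exact hN1 y.1 y.2 y'.1 y'.2 (Prod.ext (hfinj ((hσ c).1 h)) (h1.trans h1'.symm))
      · have := hζS y' y.1.1
        rw [h1'] at this
        exact this h.symm
      · exact hN1 y'.1 y'.2 y.1 y.2 (Prod.ext (hfinj ((hσ c).1 h)).symm (h1'.trans h1.symm))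
      · exact hN2 y.1 y.2 y'.1 y'.2 hyy' (Prod.ext (hfinj ((hσ c).1 h)) (h1.trans h1'.symm))
      · have := hζS y' (m y.1)
        rw [h1'] at this
        exact this h.symm
      · have := hζS y y'.1.1
        rw [h1] at this
        exact this h
      · have := hζS y (m y'.1)
        rw [h1] at this
        exact this h
      · exact hyy (hζi h)
  refine ⟨univ.image F, ?_, ?_, ?_⟩
  · intro e he
    simp only [mem_image, mem_univ, true_and] at he
    obtain ⟨j, rfl⟩ := he
    exact hFH j
  · intro e he e' he' hne c
    simp only [mem_image, mem_univ, true_and] at he he'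
    obtain ⟨i, rfl⟩ := he
    obtain ⟨j, rfl⟩ := he'
    exact hdis i j (fun h => hne (by rw [h])) c
  · have hFinj : Function.Injective F := by
      intro i j hij
      by_contra hne
      exact hdis i j hne 0 (by rw [hij])
    rw [card_image_of_injective _ hFinj, card_univ, Fintype.card_sum, Fintype.card_coe, Fintype.card_coe]
    have h2 := le_card_sdiff (univ.image f) P
    have h3 : (univ.image f).card ≤ s := by
      refine card_image_le.trans ?_
      simp
    simp only [Pf]
    omega

lemma greedy {τ T : Type*} [Fintype τ] [Fintype T] [DecidableEq τ] [Nonempty τ] [Nonempty T]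
    (ab : T → τ → Prop) (conf : τ → τ → Prop) [∀ t A, Decidable (ab t A)]
    [∀ A B, Decidable (conf A B)]
    (hrefl : ∀ A, conf A A) (hsymm : ∀ A B, conf A B → conf B A)
    (p q : ℝ) (hp0 : 0 < p) (hq0 : 0 ≤ q)
    (hq : ∀ A, ((univ.filter (fun B => conf A B)).card : ℝ) ≤ q)
    (hp : ∀ t, p * Fintype.card τ ≤ ((univ.filter (fun A => ab t A)).card : ℝ)) :
    ∀ k : ℕ, k * q ≤ p * Fintype.card τ / 2 → ∃ F : Finset τ, F.card = k ∧
      (∀ A ∈ F, ∀ B ∈ F, A ≠ B → ¬ conf A B) ∧ (∀ A ∈ F, ∃ t, ab t A) ∧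
      ∑ t, (1/2 : ℝ) ^ (F.filter (fun A => ab t A)).card ≤ Fintype.card T * (1 - p / 4) ^ k := by
  intro k
  induction k with
  | zero =>
    intro _
    refine ⟨∅, by simp, by simp, by simp, by simp⟩
  | succ k ih =>
    intro hk
    push_cast at hk
    obtain ⟨F, hFc, hF1, hF2, hF3⟩ := ih (by linarith)
    set w : T → ℝ := fun t => (1/2 : ℝ) ^ (F.filter (fun A => ab t A)).card with hw
    have hwpos : ∀ t, 0 < w t := fun t => by simp only [hw]; positivity
    set U : Finset τ := univ.filter (fun A => ∀ B ∈ F, ¬ conf B A) with hU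
    have hUc : ((Uᶜ).card : ℝ) ≤ p * Fintype.card τ / 2 := by
      have h1 : Uᶜ ⊆ F.biUnion (fun B => univ.filter (fun A => conf B A)) := by
        intro A hA
        simp only [hU, mem_compl, mem_filter, mem_univ, true_and] at hA
        push Not at hA
        simpa using hA
      have h2 := (card_le_card h1).trans card_biUnion_le
      have h3 : ((Uᶜ).card : ℝ) ≤ ∑ B ∈ F, ((univ.filter (fun A => conf B A)).card : ℝ) := by
        exact_mod_cast h2
      have h4 : ∑ B ∈ F, ((univ.filter (fun A => conf B A)).card : ℝ) ≤ F.card • q :=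
        Finset.sum_le_card_nsmul _ _ _ (fun B _ => hq B)
      rw [hFc, nsmul_eq_mul] at h4
      linarith
    set G : τ → ℝ := fun A => ∑ t, (if A ∈ U ∧ ab t A then w t else 0) with hG
    have hsum : ∑ A : τ, (p / 2 * ∑ t, w t) ≤ ∑ A, G A := by
      simp only [hG]
      rw [Finset.sum_comm, sum_const, card_univ, nsmul_eq_mul, ← mul_assoc, Finset.mul_sum]
      refine Finset.sum_le_sum fun t _ => ?_
      rw [← Finset.sum_filter, sum_const, nsmul_eq_mul]
      refine mul_le_mul_of_nonneg_right ?_ (hwpos t).le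
      have h1 : (univ.filter (fun A => ab t A)) ⊆ (univ.filter (fun A => A ∈ U ∧ ab t A)) ∪ Uᶜ := by
        intro A hA
        simp only [mem_filter, mem_univ, true_and] at hA
        by_cases h : A ∈ U <;> simp [h, hA]
      have h2 := (card_le_card h1).trans (card_union_le _ _)
      have h3 : ((univ.filter (fun A => ab t A)).card : ℝ) ≤
        ((univ.filter (fun A => A ∈ U ∧ ab t A)).card : ℝ) + (Uᶜ).card := by exact_mod_cast h2
      have := hp t
      linarith
    obtain ⟨A, -, hA⟩ := Finset.exists_le_of_sum_le univ_nonempty hsum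
    have hΨ : 0 < ∑ t, w t := Finset.sum_pos (fun t _ => hwpos t) univ_nonempty
    have hGA : 0 < G A := lt_of_lt_of_le (by positivity) hA
    obtain ⟨t0, ht0⟩ : ∃ t, A ∈ U ∧ ab t A := by
      by_contra hcon
      push Not at hcon
      have : G A = 0 := by
        simp only [hG]
        apply Finset.sum_eq_zero
        intro t _
        rw [if_neg]
        exact fun h => hcon t h.1 h.2
      linarith
    have hAU := ht0.1
    simp only [hU, mem_filter, mem_univ, true_and] at hAU
    have hAF : A ∉ F := fun h => hAU A h (hrefl A)
    refine ⟨insert A F, by rw [card_insert_of_notMem hAF, hFc], ?_, ?_, ?_⟩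
    · intro B hB C hC hne hBC
      rw [mem_insert] at hB hC
      rcases hB with rfl | hB <;> rcases hC with rfl | hC
      · exact hne rfl
      · exact hAU C hC (hsymm _ _ hBC)
      · exact hAU B hB hBC
      · exact hF1 B hB C hC hne hBC
    · intro B hB
      rw [mem_insert] at hB
      rcases hB with rfl | hB
      · exact ⟨t0, ht0.2⟩
      · exact hF2 B hB
    · have hnew : ∀ t, (1/2 : ℝ) ^ ((insert A F).filter (fun A => ab t A)).card =
          w t - 1/2 * (if A ∈ U ∧ ab t A then w t else 0) := by
        intro t
        rw [filter_insert]
        by_cases h : ab t A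
        · rw [if_pos h, card_insert_of_notMem (by simp [hAF]), if_pos ⟨ht0.1, h⟩, pow_succ]
          simp only [hw]
          ring
        · rw [if_neg h, if_neg (fun h' => h h'.2)]
          simp [hw]
      rw [Finset.sum_congr rfl (fun t _ => hnew t), Finset.sum_sub_distrib, ← Finset.mul_sum]
      have hp4 : p ≤ 1 := by
        have h1 := hp t0
        have h2 : ((univ.filter (fun A => ab t0 A)).card : ℝ) ≤ Fintype.card τ := by
          exact_mod_cast card_le_univ _
        have h3 : (0:ℝ) < Fintype.card τ := by exact_mod_cast Fintype.card_pos
        by_contra h4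
        push Not at h4
        nlinarith
      have h5 : ∑ t, w t - 1/2 * G A ≤ (∑ t, w t) * (1 - p / 4) := by linarith
      refine h5.trans ?_
      rw [pow_succ, ← mul_assoc]
      exact mul_le_mul_of_nonneg_right hF3 (by linarith)

lemma greedy' {τ T : Type*} [Fintype τ] [Fintype T] [DecidableEq τ] [Nonempty τ] [Nonempty T]
    (ab : T → τ → Prop) (conf : τ → τ → Prop) [∀ t A, Decidable (ab t A)]
    [∀ A B, Decidable (conf A B)]
    (hrefl : ∀ A, conf A A) (hsymm : ∀ A B, conf A B → conf B A)
    (p q : ℝ) (hp0 : 0 < p) (hq0 : 0 ≤ q)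
    (hq : ∀ A, ((univ.filter (fun B => conf A B)).card : ℝ) ≤ q)
    (hp : ∀ t, p * Fintype.card τ ≤ ((univ.filter (fun A => ab t A)).card : ℝ)) 
    (k l : ℕ) (hk : k * q ≤ p * Fintype.card τ / 2) 
    (hl : Fintype.card T * (1 - p / 4) ^ k < (1/2 : ℝ) ^ l) : ∃ F : Finset τ, F.card = k ∧
      (∀ A ∈ F, ∀ B ∈ F, A ≠ B → ¬ conf A B) ∧ (∀ A ∈ F, ∃ t, ab t A) ∧
      ∀ t, l ≤ (F.filter (fun A => ab t A)).card := by
  obtain ⟨F, h1, h2, h3, h4⟩ := greedy ab conf hrefl hsymm p q hp0 hq0 hq hp k hk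
  refine ⟨F, h1, h2, h3, fun t => ?_⟩
  by_contra hlt
  push Not at hlt
  have h5 : (1/2 : ℝ) ^ (F.filter (fun A => ab t A)).card ≤ 
      ∑ t, (1/2 : ℝ) ^ (F.filter (fun A => ab t A)).card :=
    Finset.single_le_sum (f := fun t => (1/2 : ℝ) ^ (F.filter (fun A => ab t A)).card)
      (fun _ _ => by positivity) (mem_univ t)
  have h6 : (1/2 : ℝ) ^ l ≤ (1/2 : ℝ) ^ (F.filter (fun A => ab t A)).card :=
    pow_le_pow_of_le_one (by norm_num) (by norm_num) hlt.le
  linarith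

/-- `A` (three rows, each a triple) absorbs the triple `t` -/
def Abs3 {n : ℕ} (H : Finset (Fin 3 → Fin n)) (t : Fin 3 → Fin n) (A : Fin 3 → Fin 3 → Fin n) : Prop :=
  (∀ i, A i ∈ H) ∧ (∀ i j, i ≠ j → ∀ c, A i c ≠ A j c) ∧ (fun i => A i i) ∈ H ∧
    ∀ i, Function.update (A i) i (t i) ∈ H

/-- two candidate absorbers share a vertex -/
def Conf3 {n : ℕ} (A B : Fin 3 → Fin 3 → Fin n) : Prop := ∃ c i j, A i c = B j c

lemma cnt_coord {n : ℕ} (c : Fin 3) (x : Fin n) :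
    (n:ℝ) * ((univ.filter (fun e : Fin 3 → Fin n => e c = x)).card : ℝ) = (n:ℝ) ^ 3 := by
  classical
  have h := sum_update_avg (fun e : Fin 3 → Fin n => if e c = x then (1:ℝ) else 0) c
  simp only [Function.update_self, Fintype.card_fin] at h
  rw [← sum_boole (R := ℝ), ← h]
  simp

lemma cnt_mat {n : ℕ} (j c : Fin 3) (g : (Fin 3 → Fin 3 → Fin n) → Fin n)
    (hg : ∀ A e, g (Function.update A j e) = g A) :
    (n:ℝ) * ((univ.filter (fun A : Fin 3 → Fin 3 → Fin n => A j c = g A)).card : ℝ) = (n:ℝ) ^ 9 := by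
  classical
  rcases Nat.eq_zero_or_pos n with rfl | hn
  · simp
  have hn' : (0:ℝ) < n := by exact_mod_cast hn
  have h := sum_update_avg (fun A : Fin 3 → Fin 3 → Fin n => if A j c = g A then (1:ℝ) else 0) j
  simp only [Function.update_self, hg] at h
  rw [sum_boole] at h
  have h2 : ∀ A : Fin 3 → Fin 3 → Fin n, (n:ℝ) * ∑ e : Fin 3 → Fin n, (if e c = g A then (1:ℝ) else 0) = (n:ℝ)^3 := by
    intro A
    rw [sum_boole]
    exact cnt_coord c (g A)
  have h3 := congrArg (fun z => (n:ℝ) * z) h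
  simp only [Finset.mul_sum] at h3
  simp only [← Finset.mul_sum] at h3
  rw [Finset.mul_sum] at h3
  simp only [h2] at h3
  simp only [sum_const, card_univ, Fintype.card_fun, Fintype.card_fin, nsmul_eq_mul] at h3
  push_cast at h3
  have h4 : (n:ℝ)^3 * ((n:ℝ) ^ 9) = (n:ℝ)^3 * (n * ((univ.filter (fun A : Fin 3 → Fin 3 → Fin n => A j c = g A)).card : ℝ)) := by
    linarith
  exact (mul_left_cancel₀ (by positivity) h4).symm

lemma conf_count {n : ℕ} (hn : 0 < n) (A : Fin 3 → Fin 3 → Fin n) [∀ B, Decidable (Conf3 A B)] :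
    ((univ.filter (fun B => Conf3 A B)).card : ℝ) ≤ 27 * (n:ℝ)^8 := by
  classical
  have hn' : (0:ℝ) < n := by exact_mod_cast hn
  have h1 : (univ.filter (fun B => Conf3 A B)) ⊆ (univ : Finset (Fin 3 × Fin 3 × Fin 3)).biUnion 
      (fun p => univ.filter (fun B : Fin 3 → Fin 3 → Fin n => B p.2.2 p.1 = A p.2.1 p.1)) := by
    intro B hB
    simp only [mem_filter, mem_univ, true_and] at hB
    obtain ⟨c, i, j, h⟩ := hB
    simp only [mem_biUnion, mem_filter, mem_univ, true_and]
    exact ⟨(c, i, j), h.symm⟩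
  have h2 := (card_le_card h1).trans card_biUnion_le
  have h3 : ((univ.filter (fun B => Conf3 A B)).card : ℝ) ≤ ∑ p : Fin 3 × Fin 3 × Fin 3,
     ((univ.filter (fun B : Fin 3 → Fin 3 → Fin n => B p.2.2 p.1 = A p.2.1 p.1)).card : ℝ) := by exact_mod_cast h2
  have h4 : ∀ p : Fin 3 × Fin 3 × Fin 3, 
     ((univ.filter (fun B : Fin 3 → Fin 3 → Fin n => B p.2.2 p.1 = A p.2.1 p.1)).card : ℝ) = (n:ℝ)^8 := by
    intro p
    have := cnt_mat p.2.2 p.1 (fun _ => A p.2.1 p.1) (fun _ _ => rfl)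
    apply mul_left_cancel₀ hn'.ne'
    rw [this]; ring
  simp only [h4] at h3
  refine h3.trans (le_of_eq ?_)
  simp only [sum_const, card_univ, Fintype.card_prod, Fintype.card_fin, nsmul_eq_mul]
  norm_num

lemma C_count {n : ℕ} (H : Finset (Fin 3 → Fin n)) (hn : 0 < n) 
    (hdeg : ∀ (i : Fin 3) (x : Fin n), 5 / 9 * (n:ℝ) ^ 2 ≤ (deg3 H i x : ℝ)) (i : Fin 3) (x y : Fin n) :
    (n:ℝ)^2 / 9 ≤ ((univ.filter (fun e => e i = x ∧ e ∈ H ∧ Function.update e i y ∈ H)).card : ℝ) := by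
  classical
  have hn' : (0:ℝ) < n := by exact_mod_cast hn
  set W := univ.filter (fun e : Fin 3 → Fin n => e i = x) with hW
  set X := H.filter (fun e => e i = x) with hX
  set Y := W.filter (fun e => Function.update e i y ∈ H) with hY
  have hWc : (W.card : ℝ) = (n:ℝ)^2 := by
    apply mul_left_cancel₀ hn'.ne'
    rw [cnt_coord i x]; ring
  have hXc : 5 / 9 * (n:ℝ) ^ 2 ≤ X.card := hdeg i x
  have hYc : 5 / 9 * (n:ℝ) ^ 2 ≤ Y.card := by
    refine (hdeg i y).trans ?_
    norm_cast
    unfold deg3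
    apply Finset.card_le_card_of_injOn (fun e => Function.update e i x)
    · intro e he
      simp only [coe_filter, Set.mem_ofPred_eq] at he
      simp only [hY, hW, coe_filter, mem_filter, mem_univ, true_and, Set.mem_ofPred_eq, Function.update_self,
        Function.update_idem]
      rw [← he.2, Function.update_eq_self]
      exact he.1
    · intro e he f hf hef
      simp only [coe_filter, Set.mem_ofPred_eq] at he hf
      have := congrArg (fun e => Function.update e i y) hef
      simp only [Function.update_idem] at this
      rw [← he.2, Function.update_eq_self, he.2, ← hf.2, Function.update_eq_self] at this
      exact this
  have hu : (X ∪ Y).card ≤ W.card := by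
    apply card_le_card
    intro e he
    simp only [hX, hY, hW, mem_union, mem_filter, mem_univ, true_and] at he ⊢
    tauto
  have h1 := card_union_add_card_inter X Y
  have h2 : (X ∩ Y).card ≤ (univ.filter (fun e => e i = x ∧ e ∈ H ∧ Function.update e i y ∈ H)).card := by
    apply card_le_card
    intro e he
    simp only [hX, hY, hW, mem_inter, mem_filter, mem_univ, true_and] at he ⊢
    tauto
  have h3 : ((X ∪ Y).card : ℝ) ≤ W.card := by exact_mod_cast hu
  have h4 : ((X ∪ Y).card : ℝ) + (X ∩ Y).card = X.card + Y.card := by exact_mod_cast h1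
  have h5 : ((X ∩ Y).card : ℝ) ≤ ((univ.filter (fun e => e i = x ∧ e ∈ H ∧ Function.update e i y ∈ H)).card : ℝ) := by
    exact_mod_cast h2
  linarith

lemma abs_count {n : ℕ} (H : Finset (Fin 3 → Fin n)) (hn : 200000 ≤ n)
    (hdeg : ∀ (i : Fin 3) (x : Fin n), 5 / 9 * (n:ℝ) ^ 2 ≤ (deg3 H i x : ℝ)) (t : Fin 3 → Fin n)
    [∀ A, Decidable (Abs3 H t A)] :
    1 / 2000 * (n:ℝ)^9 ≤ ((univ.filter (fun A => Abs3 H t A)).card : ℝ) := by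
  classical
  have hn0 : 0 < n := by omega
  have hn' : (0:ℝ) < n := by exact_mod_cast hn0
  have hn5 : (200000:ℝ) ≤ n := by exact_mod_cast hn
  set C : Fin 3 → Fin n → Finset (Fin 3 → Fin n) := fun i x =>
    univ.filter (fun e => e i = x ∧ e ∈ H ∧ Function.update e i (t i) ∈ H) with hC
  have hCc : ∀ i x, (n:ℝ)^2 / 9 ≤ ((C i x).card : ℝ) := fun i x => C_count H hn0 hdeg i x (t i)
  have hHc : 5 / 9 * (n:ℝ)^3 ≤ (H.card : ℝ) := by
    have h1 : H.card = ∑ x : Fin n, deg3 H 0 x :=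
      Finset.card_eq_sum_card_fiberwise (s := H) (t := univ) (f := fun e : Fin 3 → Fin n => e 0) (fun _ _ => by simp)
    rw [h1]
    push_cast
    have h2 : ∑ x : Fin n, (5 / 9 * (n:ℝ)^2) ≤ ∑ x : Fin n, (deg3 H 0 x : ℝ) :=
      Finset.sum_le_sum fun x _ => hdeg 0 x
    refine le_trans (le_of_eq ?_) h2
    simp
    ring
  set S := H.biUnion (fun u => Fintype.piFinset (fun i => C i (u i))) with hS
  have hSc : 5 / 6561 * (n:ℝ)^9 ≤ (S.card : ℝ) := by
    rw [hS, card_biUnion]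
    · push_cast
      have : ∑ u ∈ H, ((n:ℝ)^2/9)^3 ≤ ∑ u ∈ H, ((Fintype.piFinset (fun i => C i (u i))).card : ℝ) := by
        refine Finset.sum_le_sum fun u _ => ?_
        rw [Fintype.card_piFinset]
        push_cast
        calc ((n:ℝ)^2/9)^3 = ∏ i : Fin 3, ((n:ℝ)^2/9) := by rw [prod_const]; simp
          _ ≤ _ := Finset.prod_le_prod (fun _ _ => by positivity) (fun i _ => hCc i (u i))
      refine le_trans ?_ this
      rw [sum_const, nsmul_eq_mul]
      calc 5 / 6561 * (n:ℝ)^9 = 5 / 9 * (n:ℝ)^3 * ((n:ℝ)^2/9)^3 := by ring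
        _ ≤ _ := mul_le_mul_of_nonneg_right hHc (by positivity)
    · intro u _ v _ huv
      rw [Function.onFun, Finset.disjoint_left]
      intro A hA hA'
      apply huv
      ext i
      simp only [Fintype.mem_piFinset, hC, mem_filter, mem_univ, true_and] at hA hA'
      rw [← (hA i).1, (hA' i).1]
  set Bd : Fin 3 × Fin 3 × Fin 3 → Finset (Fin 3 → Fin 3 → Fin n) := fun p =>
    if p.2.1 ≠ p.2.2 then univ.filter (fun A => A p.2.2 p.1 = A p.2.1 p.1) else ∅ with hBd
  have hBc : ∀ p, ((Bd p).card : ℝ) ≤ (n:ℝ)^8 := by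
    intro p
    simp only [hBd]
    split_ifs with h
    · have := cnt_mat (n := n) p.2.2 p.1 (fun A => A p.2.1 p.1) (fun A e => by rw [Function.update_of_ne h])
      apply le_of_eq
      apply mul_left_cancel₀ hn'.ne'
      rw [this]; ring
    · simp
  have hsub : S ⊆ (univ.filter (fun A => Abs3 H t A)) ∪ univ.biUnion Bd := by
    intro A hA
    simp only [hS, mem_biUnion, Fintype.mem_piFinset, hC, mem_filter, mem_univ, true_and] at hA
    obtain ⟨u, hu, hA⟩ := hA
    by_cases hd : ∀ i j, i ≠ j → ∀ c, A i c ≠ A j c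
    · apply mem_union_left
      simp only [mem_filter, mem_univ, true_and]
      refine ⟨fun i => (hA i).2.1, hd, ?_, fun i => (hA i).2.2⟩
      have : (fun i => A i i) = u := funext fun i => (hA i).1
      rw [this]; exact hu
    · apply mem_union_right
      push Not at hd
      obtain ⟨i, j, hij, c, h⟩ := hd
      simp only [mem_biUnion, mem_univ, true_and]
      refine ⟨(c, i, j), ?_⟩
      simp [hBd, hij, h]
  have h1 := (card_le_card hsub).trans (card_union_le _ _)
  have h2 : ((univ.biUnion Bd).card : ℝ) ≤ 27 * (n:ℝ)^8 := by
    have h3 : ((univ.biUnion Bd).card : ℝ) ≤ ∑ p, ((Bd p).card : ℝ) := by exact_mod_cast card_biUnion_le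
    refine h3.trans ((Finset.sum_le_sum fun p _ => hBc p).trans (le_of_eq ?_))
    simp only [sum_const, card_univ, Fintype.card_prod, Fintype.card_fin, nsmul_eq_mul]
    norm_num
  have h3 : (S.card : ℝ) ≤ ((univ.filter (fun A => Abs3 H t A)).card : ℝ) + ((univ.biUnion Bd).card : ℝ) := by
    exact_mod_cast h1
  have h4 : 200000 * (n:ℝ)^8 ≤ (n:ℝ)^9 := by
    rw [pow_succ _ 8, mul_comm]
    exact mul_le_mul_of_nonneg_left hn5 (by positivity)
  have h5 : (0:ℝ) < (n:ℝ)^8 := by positivity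
  linarith

lemma numerics {n : ℕ} {γ : ℝ} (h0 : 0 < γ) (h1 : γ < 1) (hn : (10:ℝ)^22 / γ ^ 12 < n) :
    ∃ R k : ℕ, 2 ≤ R ∧ 2 * R ^ 4 < n ∧ (15:ℝ) / R ≤ γ / 2 ∧ (k:ℝ) ≤ γ * n / 108000 ∧
      (n:ℝ)^3 * (1 - 1 / 2000 / 4) ^ k < (1/2 : ℝ) ^ (4 * R ^ 3) := by
  have hx : ∀ a ≤ 12, (10:ℝ)^22 < n * γ ^ a := by
    intro a ha
    rw [div_lt_iff₀ (by positivity)] at hn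
    refine hn.trans_le ?_
    exact mul_le_mul_of_nonneg_left (pow_le_pow_of_le_one h0.le h1.le ha) (by positivity)
  have hnn : (10:ℝ)^22 < n := by simpa using hx 0 (by norm_num)
  have hnpos : (0:ℝ) < n := lt_trans (by positivity) hnn
  set R := ⌈30 / γ⌉₊ with hR
  set k := ⌊γ * n / 108000⌋₊ with hk
  have hR1 : 30 / γ ≤ R := Nat.le_ceil _
  have hR2 : (R:ℝ) < 30 / γ + 1 := Nat.ceil_lt_add_one (by positivity)
  have hR3 : (R:ℝ) ≤ 31 / γ := by
    have : 1 ≤ 1 / γ := by rw [le_div_iff₀ h0]; linarith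
    have e : 31 / γ = 30 / γ + 1 / γ := by ring
    linarith
  have h30 : (30:ℝ) ≤ 30 / γ := by rw [le_div_iff₀ h0]; linarith
  have hRpos : (0:ℝ) < R := by linarith
  have hRγ : (R:ℝ) * γ ≤ 31 := by rwa [le_div_iff₀ h0] at hR3
  have hk1 : (k:ℝ) ≤ γ * n / 108000 := Nat.floor_le (by positivity)
  have hk2 : γ * n / 108000 < k + 1 := Nat.lt_floor_add_one _
  have hγn : (10:ℝ)^22 < n * γ := by simpa using hx 1 (by norm_num)
  refine ⟨R, k, ?_, ?_, ?_, hk1, ?_⟩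
  · have : (2:ℝ) ≤ R := by linarith
    exact_mod_cast this
  · have h4 := hx 4 (by norm_num)
    have h5 : ((R:ℝ) * γ)^4 ≤ 31 ^ 4 := pow_le_pow_left₀ (by positivity) hRγ 4
    have h6 : 2 * (R:ℝ)^4 * γ^4 < n * γ ^ 4 := by
      rw [mul_pow] at h5
      nlinarith
    have h7 : 2 * (R:ℝ)^4 < n := lt_of_mul_lt_mul_right h6 (by positivity)
    exact_mod_cast h7
  · rw [div_le_iff₀ hRpos]
    rw [div_le_iff₀ h0] at hR1
    linarith
  · have hl : 4 * (R:ℝ)^3 ≤ γ * n / 10 ^ 15 := by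
      have h4 := hx 4 (by norm_num)
      have h5 : ((R:ℝ) * γ)^3 ≤ 31 ^ 3 := pow_le_pow_left₀ (by positivity) hRγ 3
      rw [mul_pow] at h5
      have h6 : 4 * (R:ℝ)^3 * γ^3 ≤ (γ * n / 10 ^ 15) * γ ^ 3 := by
        have : (γ * n / 10 ^ 15) * γ ^ 3 = n * γ ^ 4 / 10 ^ 15 := by ring
        rw [this, le_div_iff₀ (by positivity)]
        nlinarith
      exact le_of_mul_le_mul_right h6 (by positivity)
    set y := Real.sqrt n with hy
    have hypos : 0 < y := Real.sqrt_pos.2 hnpos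
    have hyy : y * y = n := Real.mul_self_sqrt hnpos.le
    have hyγ : (10:ℝ)^11 ≤ y * γ := by
      have h2 := hx 2 (by norm_num)
      have : (10:ℝ)^11 * 10^11 ≤ (y * γ) * (y * γ) := by
        have e : (y * γ) * (y * γ) = n * γ^2 := by rw [← hyy]; ring
        rw [e]
        refine le_trans (le_of_eq ?_) h2.le
        norm_num
      by_contra hc; push Not at hc; nlinarith [mul_pos hypos h0]
    have hy6 : 6 * y ≤ 6 * (γ * n) / 10^11 := by
      rw [le_div_iff₀ (by positivity)]
      have : γ * n = (y * γ) * y := by rw [← hyy]; ring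
      rw [this]
      nlinarith
    have hexpn : (n:ℝ) ^ 3 ≤ Real.exp (6 * y) := by
      have h1 : y ≤ Real.exp y := by
        have := Real.add_one_le_exp y
        linarith
      have h2 : Real.exp (6 * y) = (Real.exp y) ^ 6 := by
        rw [← Real.exp_nat_mul]; norm_num
      rw [h2, ← hyy]
      calc (y * y)^3 = y ^ 6 := by ring
        _ ≤ _ := pow_le_pow_left₀ hypos.le h1 6
    have hexpk : (1 - 1 / 2000 / 4 : ℝ) ^ k ≤ Real.exp (- (k / 8000)) := by
      have h1 : (1 - 1 / 2000 / 4 : ℝ) ≤ Real.exp (-(1/8000)) := by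
        have := Real.add_one_le_exp (-(1/8000) : ℝ)
        linarith
      have h2 : Real.exp (- ((k:ℝ) / 8000)) = (Real.exp (-(1/8000))) ^ k := by
        rw [← Real.exp_nat_mul]; congr 1; ring
      rw [h2]
      exact pow_le_pow_left₀ (by norm_num) h1 k
    have hexpl : Real.exp (- (4 * (R:ℝ)^3)) ≤ (1/2 : ℝ) ^ (4 * R ^ 3) := by
      have h1 : Real.exp (-1) ≤ 1/2 := by
        rw [Real.exp_neg, ← one_div]
        apply one_div_le_one_div_of_le (by norm_num)
        have := Real.add_one_le_exp (1:ℝ)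
        linarith
      have h2 : Real.exp (- (4 * (R:ℝ)^3)) = (Real.exp (-1)) ^ (4 * R ^ 3) := by
        rw [← Real.exp_nat_mul]; congr 1; push_cast; ring
      rw [h2]
      exact pow_le_pow_left₀ (Real.exp_pos _).le h1 _
    calc (n:ℝ)^3 * (1 - 1 / 2000 / 4) ^ k ≤ Real.exp (6 * y) * Real.exp (- (k / 8000)) :=
          mul_le_mul hexpn hexpk (by positivity) (by positivity)
      _ = Real.exp (6 * y + - (k / 8000)) := by rw [Real.exp_add]
      _ < Real.exp (- (4 * (R:ℝ)^3)) := by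
          rw [Real.exp_lt_exp]
          linarith
      _ ≤ _ := hexpl

lemma leftover_card {n : ℕ} (F : Finset (Fin 3 → Fin 3 → Fin n)) (M : Finset (Fin 3 → Fin n))
    (hF : ∀ A ∈ F, ∀ B ∈ F, A ≠ B → ¬ Conf3 A B)
    (hF2 : ∀ A ∈ F, ∀ i j, i ≠ j → ∀ c, A i c ≠ A j c)
    (hM : ∀ e ∈ M, ∀ f ∈ M, e ≠ f → ∀ i, e i ≠ f i)
    (hMF : ∀ e ∈ M, ∀ A ∈ F, ∀ i c, e c ≠ A i c) (c : Fin 3) :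
    (univ.filter (fun z : Fin n => (∀ e ∈ M, e c ≠ z) ∧ ∀ A ∈ F, ∀ i, A i c ≠ z)).card
      + 3 * F.card + M.card = n := by
  classical
  set L := univ.filter (fun z : Fin n => (∀ e ∈ M, e c ≠ z) ∧ ∀ A ∈ F, ∀ i, A i c ≠ z) with hL
  set U1 := M.image (fun e => e c) with hU1
  set U2 := (F ×ˢ (univ : Finset (Fin 3))).image (fun p => p.1 p.2 c) with hU2
  have hU1c : U1.card = M.card := by
    apply card_image_of_injOn
    intro e he f hf hef
    by_contra hne
    exact hM e he f hf hne c hef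
  have hU2c : U2.card = 3 * F.card := by
    rw [hU2, card_image_of_injOn, card_product]
    · simp [mul_comm]
    · rintro ⟨A, i⟩ hA ⟨B, j⟩ hB hAB
      simp only [coe_product, coe_univ, Set.mem_prod, mem_coe, Set.mem_univ, and_true] at hA hB hAB
      have hE : A = B := by
        by_contra hne
        exact hF A hA B hB hne ⟨c, i, j, hAB⟩
      subst hE
      have : i = j := by
        by_contra hne
        exact hF2 A hA i j hne c hAB
      rw [this]
  have hd : Disjoint U1 U2 := by
    rw [Finset.disjoint_left]
    intro z h1 h2
    simp only [hU1, hU2, mem_image, mem_product, mem_univ, and_true] at h1 h2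
    obtain ⟨e, he, rfl⟩ := h1
    obtain ⟨⟨A, i⟩, hA, h⟩ := h2
    exact hMF e he A hA i c h.symm
  have hLU : L = (U1 ∪ U2)ᶜ := by
    ext z
    simp only [hL, hU1, hU2, mem_filter, mem_univ, true_and, mem_compl, mem_union, mem_image,
      mem_product, and_true, not_or, not_exists, not_and, Prod.forall]
    constructor
    · rintro ⟨h1, h2⟩
      exact ⟨h1, fun A i hA => h2 A hA i⟩
    · rintro ⟨h1, h2⟩
      exact ⟨h1, fun A hA i => h2 A i hA⟩
  have h1 := card_compl_add_card (U1 ∪ U2)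
  rw [← hLU, card_union_of_disjoint hd, hU1c, hU2c, Fintype.card_fin] at h1
  omega

lemma perfect_of_cover {n : ℕ} (E : Finset (Fin 3 → Fin n)) (hE : E.card ≤ n)
    (hcov : ∀ c z, ∃ e ∈ E, e c = z) :
    (∀ e ∈ E, ∀ f ∈ E, e ≠ f → ∀ i, e i ≠ f i) ∧ E.card = n := by
  classical
  have himg : ∀ c, (E.image (fun e => e c)) = univ := by
    intro c
    ext z
    simpa using hcov c z
  have hc : ∀ c, (E.image (fun e => e c)).card = n := by
    intro c; rw [himg c]; simp
  have hEn : E.card = n := by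
    have h1 := hc 0
    have h2 : (E.image (fun e => e 0)).card ≤ E.card := card_image_le
    omega
  refine ⟨?_, hEn⟩
  intro e he f hf hne i h
  have hinj : Set.InjOn (fun e : Fin 3 → Fin n => e i) E := by
    rw [← Finset.card_image_iff, hc i, hEn]
  exact hne (hinj he hf h)

lemma final_absorb {n : ℕ} (H : Finset (Fin 3 → Fin n)) (F : Finset (Fin 3 → Fin 3 → Fin n))
    (M : Finset (Fin 3 → Fin n)) (hMH : M ⊆ H)
    (hF : ∀ A ∈ F, ∀ B ∈ F, A ≠ B → ¬ Conf3 A B)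
    (hFa : ∀ A ∈ F, ∃ t, Abs3 H t A)
    (hM : ∀ e ∈ M, ∀ f ∈ M, e ≠ f → ∀ i, e i ≠ f i)
    (hMF : ∀ e ∈ M, ∀ A ∈ F, ∀ i c, e c ≠ A i c) [∀ t A, Decidable (Abs3 H t A)]
    (hX : ∀ t, n - 3 * F.card - M.card ≤ (F.filter (fun A => Abs3 H t A)).card) :
    ∃ E : Finset (Fin 3 → Fin n), E ⊆ H ∧
          (∀ e ∈ E, ∀ f ∈ E, e ≠ f → ∀ i, e i ≠ f i) ∧ E.card = n := by
  classical
  have hF2 : ∀ A ∈ F, ∀ i j, i ≠ j → ∀ c, A i c ≠ A j c := by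
    intro A hA
    obtain ⟨t, ht⟩ := hFa A hA
    exact ht.2.1
  have hlc := leftover_card F M hF hF2 hM hMF
  set L : Fin 3 → Finset (Fin n) := fun c =>
    univ.filter (fun z : Fin n => (∀ e ∈ M, e c ≠ z) ∧ ∀ A ∈ F, ∀ i, A i c ≠ z) with hL
  obtain ⟨l, hl⟩ : ∃ l, l = n - 3 * F.card - M.card := ⟨_, rfl⟩
  have hLl : ∀ c, (L c).card = l := by
    intro c
    have h1 : (L c).card + 3 * F.card + M.card = n := hlc c
    omega
  have hln : l + 3 * F.card + M.card = n := by
    have h1 : (L 0).card + 3 * F.card + M.card = n := hlc 0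
    have := hLl 0
    omega
  let T : Fin l → Fin 3 → Fin n := fun j c => ((L c).equivFinOfCardEq (hLl c)).symm j
  have hT : ∀ c, ∀ z ∈ L c, ∃ j, T j c = z := by
    intro c z hz
    refine ⟨(L c).equivFinOfCardEq (hLl c) ⟨z, hz⟩, ?_⟩
    simp [T]
  obtain ⟨φ, hφi, hφ⟩ := exists_inj_choice (fun j : Fin l => F.filter (fun A => Abs3 H (T j) A)) (by
    intro j
    have := hX (T j)
    rw [Fintype.card_fin]
    omega)
  simp only [mem_filter] at hφ
  set E1 := ((F \ univ.image φ) ×ˢ (univ : Finset (Fin 3))).image (fun p => p.1 p.2) with hE1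
  set E2 := (univ : Finset (Fin l × Fin 3)).image (fun p => Function.update (φ p.1 p.2) p.2 (T p.1 p.2)) with hE2
  set E3 := (univ : Finset (Fin l)).image (fun j => (fun i => φ j i i)) with hE3
  have hE1c : E1.card ≤ (F.card - l) * 3 := by
    refine card_image_le.trans ?_
    rw [card_product, card_sdiff_of_subset, card_image_of_injective _ hφi]
    · simp
    · intro A hA
      simp only [mem_image, mem_univ, true_and] at hA
      obtain ⟨j, rfl⟩ := hA
      exact (hφ j).1
  have hlF : l ≤ F.card := by
    have h1 : (univ.image φ).card ≤ F.card := by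
      apply card_le_card
      intro A hA
      simp only [mem_image, mem_univ, true_and] at hA
      obtain ⟨j, rfl⟩ := hA
      exact (hφ j).1
    rw [card_image_of_injective _ hφi] at h1
    simpa using h1
  have hE2c : E2.card ≤ l * 3 := by
    refine card_image_le.trans ?_
    simp
  have hE3c : E3.card ≤ l := by
    refine card_image_le.trans ?_
    simp
  refine ⟨M ∪ E1 ∪ E2 ∪ E3, ?_, perfect_of_cover _ ?_ ?_⟩
  · intro e he
    simp only [mem_union] at he
    rcases he with ((he | he) | he) | he
    · exact hMH he
    · simp only [hE1, mem_image, mem_product, mem_sdiff, mem_univ, and_true] at he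
      obtain ⟨⟨A, i⟩, ⟨hA, -⟩, rfl⟩ := he
      obtain ⟨t, ht⟩ := hFa A hA
      exact ht.1 i
    · simp only [hE2, mem_image, mem_univ, true_and] at he
      obtain ⟨⟨j, i⟩, rfl⟩ := he
      exact (hφ j).2.2.2.2 i
    · simp only [hE3, mem_image, mem_univ, true_and] at he
      obtain ⟨j, rfl⟩ := he
      exact (hφ j).2.2.2.1
  · have h1 := card_union_le (M ∪ E1 ∪ E2) E3
    have h2 := card_union_le (M ∪ E1) E2
    have h3 := card_union_le M E1
    omega
  · intro c z
    by_cases hzM : ∃ e ∈ M, e c = z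
    · obtain ⟨e, he, h⟩ := hzM
      exact ⟨e, by simp [he], h⟩
    by_cases hzF : ∃ A ∈ F, ∃ i, A i c = z
    · obtain ⟨A, hA, i, h⟩ := hzF
      by_cases hAφ : A ∈ univ.image φ
      · simp only [mem_image, mem_univ, true_and] at hAφ
        obtain ⟨j, rfl⟩ := hAφ
        by_cases hic : i = c
        · subst hic
          refine ⟨fun i => φ j i i, ?_, h⟩
          apply mem_union_right
          simp only [hE3, mem_image, mem_univ, true_and]
          exact ⟨j, rfl⟩
        · refine ⟨Function.update (φ j i) i (T j i), ?_, ?_⟩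
          · apply mem_union_left
            apply mem_union_right
            simp only [hE2, mem_image, mem_univ, true_and]
            exact ⟨(j, i), rfl⟩
          · rw [Function.update_of_ne (fun h => hic h.symm), h]
      · refine ⟨A i, ?_, h⟩
        apply mem_union_left
        apply mem_union_left
        apply mem_union_right
        simp only [hE1, mem_image, mem_product, mem_univ, and_true]
        exact ⟨(A, i), by simpa [hA] using hAφ, rfl⟩
    · push Not at hzM hzF
      obtain ⟨j, hj⟩ := hT c z (by simp only [hL, mem_filter, mem_univ, true_and]; exact ⟨hzM, hzF⟩)
      refine ⟨Function.update (φ j c) c (T j c), ?_, ?_⟩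
      · apply mem_union_left
        apply mem_union_right
        simp only [hE2, mem_image, mem_univ, true_and]
        exact ⟨(j, c), rfl⟩
      · rw [Function.update_self, hj]
 
lemma cnt_two {n : ℕ} (c c' : Fin 3) (hcc : c ≠ c') (z x : Fin n) :
    ((univ.filter (fun e : Fin 3 → Fin n => e c = z ∧ e c' = x)).card : ℝ) = n := by
  classical
  have hn : (0:ℝ) < n := by
    have := z.pos
    exact_mod_cast this
  have h := sum_update_avg (fun e : Fin 3 → Fin n => if e c = z ∧ e c' = x then (1:ℝ) else 0) c'
  simp only [Function.update_self, Fintype.card_fin, Function.update_of_ne hcc] at h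
  have h2 : ∀ f : Fin 3 → Fin n, ∑ y : Fin n, (if f c = z ∧ y = x then (1:ℝ) else 0) = if f c = z then 1 else 0 := by
    intro f
    by_cases hf : f c = z <;> simp [hf]
  simp only [h2] at h
  rw [sum_boole, sum_boole] at h
  have h3 := cnt_coord c z
  rw [h] at h3
  have : (n:ℝ) * (n:ℝ) * ((univ.filter (fun e : Fin 3 → Fin n => e c = z ∧ e c' = x)).card : ℝ) = (n:ℝ) * n * n := by
    rw [mul_assoc, h3]; ring
  exact mul_left_cancel₀ (by positivity) this

lemma deg_rest {n : ℕ} (H : Finset (Fin 3 → Fin n)) (F : Finset (Fin 3 → Fin 3 → Fin n)) (c : Fin 3) (z : Fin n)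
    (hz : ∀ A ∈ F, ∀ i, A i c ≠ z) :
    (deg3 H c z : ℝ) ≤ deg3 (H.filter (fun e => ∀ A ∈ F, ∀ i c, e c ≠ A i c)) c z + 9 * F.card * n := by
  classical
  set B : (Fin 3 → Fin 3 → Fin n) × Fin 3 × Fin 3 → Finset (Fin 3 → Fin n) := fun p =>
    if c ≠ p.2.2 then univ.filter (fun e => e c = z ∧ e p.2.2 = p.1 p.2.1 p.2.2) else ∅ with hB
  have hBc : ∀ p, ((B p).card : ℝ) ≤ n := by
    intro p
    simp only [hB]
    split_ifs with h
    · exact (cnt_two c p.2.2 h z _).le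
    · simp
  have hsub : H.filter (fun e => e c = z) ⊆ ((H.filter (fun e => ∀ A ∈ F, ∀ i c, e c ≠ A i c)).filter (fun e => e c = z))
      ∪ (F ×ˢ (univ : Finset (Fin 3 × Fin 3))).biUnion B := by
    intro e he
    simp only [mem_filter] at he
    by_cases h : ∀ A ∈ F, ∀ i c, e c ≠ A i c
    · apply mem_union_left
      simp only [mem_filter]
      exact ⟨⟨he.1, h⟩, he.2⟩
    · apply mem_union_right
      push Not at h
      obtain ⟨A, hA, i, c', hc'⟩ := h
      simp only [mem_biUnion, mem_product, mem_univ, and_true]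
      refine ⟨(A, i, c'), hA, ?_⟩
      have hne : c ≠ c' := by
        rintro rfl
        exact hz A hA i (hc'.symm.trans he.2)
      simp only [hB]
      rw [if_pos hne]
      simp [he.2, hc']
  have h1 := (card_le_card hsub).trans (card_union_le _ _)
  have h2 : (((F ×ˢ (univ : Finset (Fin 3 × Fin 3))).biUnion B).card : ℝ) ≤ 9 * F.card * n := by
    have h3 : (((F ×ˢ (univ : Finset (Fin 3 × Fin 3))).biUnion B).card : ℝ) ≤ 
        ∑ p ∈ F ×ˢ (univ : Finset (Fin 3 × Fin 3)), ((B p).card : ℝ) := by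
      exact_mod_cast card_biUnion_le
    refine h3.trans ((Finset.sum_le_card_nsmul _ _ _ (fun p _ => hBc p)).trans (le_of_eq ?_))
    rw [nsmul_eq_mul, card_product, card_univ, Fintype.card_prod, Fintype.card_fin]
    push_cast
    ring
  have h4 : (deg3 H c z : ℝ) ≤ deg3 (H.filter (fun e => ∀ A ∈ F, ∀ i c, e c ≠ A i c)) c z
      + ((F ×ˢ (univ : Finset (Fin 3 × Fin 3))).biUnion B).card := by
    unfold deg3
    exact_mod_cast h1
  linarith

lemma main_lemma {n : ℕ} {γ : ℝ} (h0 : 0 < γ) (hn : (10:ℝ)^22 / γ ^ 12 < n)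
    (H : Finset (Fin 3 → Fin n))
    (hdeg : ∀ (i : Fin 3) (x : Fin n), (5 / 9 + γ) * (n:ℝ) ^ 2 ≤ (deg3 H i x : ℝ)) :
    ∃ M : Finset (Fin 3 → Fin n), M ⊆ H ∧
          (∀ e ∈ M, ∀ f ∈ M, e ≠ f → ∀ i, e i ≠ f i) ∧ M.card = n := by
  classical
  have hnpos : (0:ℝ) < n := lt_trans (by positivity) hn
  have hn0 : 0 < n := by exact_mod_cast hnpos
  have h1 : γ < 1 := by
    have h2 := hdeg 0 ⟨0, hn0⟩
    have h3 : (deg3 H 0 ⟨0, hn0⟩ : ℝ) ≤ (n:ℝ)^2 := by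
      have h4 := cnt_coord (n := n) 0 ⟨0, hn0⟩
      have h5 : ((univ.filter (fun e : Fin 3 → Fin n => e 0 = ⟨0, hn0⟩)).card : ℝ) = (n:ℝ)^2 := by
        apply mul_left_cancel₀ hnpos.ne'
        rw [h4]; ring
      rw [← h5]
      unfold deg3
      exact_mod_cast card_le_card (filter_subset_filter _ (subset_univ H))
    have h4 : (0:ℝ) < (n:ℝ)^2 := by positivity
    by_contra hc
    push Not at hc
    nlinarith
  obtain ⟨R, k, hR, hRn, hR15, hk, hnum⟩ := numerics h0 h1 hn
  have hnn : (10:ℝ)^22 < n := by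
    refine lt_of_le_of_lt ?_ hn
    rw [le_div_iff₀ (by positivity)]
    have : γ ^ 12 ≤ 1 := pow_le_one₀ h0.le h1.le
    nlinarith
  have hn2 : 200000 ≤ n := by
    have : (200000:ℝ) ≤ n := by linarith
    exact_mod_cast this
  have hdeg' : ∀ (i : Fin 3) (x : Fin n), 5 / 9 * (n:ℝ) ^ 2 ≤ (deg3 H i x : ℝ) := by
    intro i x
    refine le_trans ?_ (hdeg i x)
    have : 0 < γ * (n:ℝ)^2 := by positivity
    linarith
  have : Nonempty (Fin n) := ⟨⟨0, hn0⟩⟩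
  have hcτ : (Fintype.card (Fin 3 → Fin 3 → Fin n) : ℝ) = (n:ℝ)^9 := by
    simp only [Fintype.card_fun, Fintype.card_fin]
    push_cast
    ring
  have hcT : (Fintype.card (Fin 3 → Fin n) : ℝ) = (n:ℝ)^3 := by
    simp only [Fintype.card_fun, Fintype.card_fin]
    push_cast
    ring
  obtain ⟨F, hFc, hF1, hFa, hFl⟩ := greedy' (Abs3 H) (Conf3 (n := n))
    (fun A => ⟨0, 0, 0, rfl⟩) (fun A B ⟨c, i, j, h⟩ => ⟨c, j, i, h.symm⟩)
    (1 / 2000) (27 * (n:ℝ)^8) (by norm_num) (by positivity) (fun A => conf_count hn0 A)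
    (fun t => by rw [hcτ]; exact abs_count H hn2 hdeg' t) k (4 * R ^ 3)
    (by
      rw [hcτ]
      have h2 : (k:ℝ) ≤ n / 108000 := by
        have : γ * n ≤ 1 * n := mul_le_mul_of_nonneg_right h1.le hnpos.le
        linarith
      have h3 : (k:ℝ) * (27 * (n:ℝ)^8) ≤ n / 108000 * (27 * (n:ℝ)^8) :=
        mul_le_mul_of_nonneg_right h2 (by positivity)
      refine h3.trans (le_of_eq ?_)
      ring)
    (by rw [hcT]; exact hnum)
  have hF2 : ∀ A ∈ F, ∀ i j, i ≠ j → ∀ c, A i c ≠ A j c := by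
    intro A hA
    obtain ⟨t, ht⟩ := hFa A hA
    exact ht.2.1
  set H' := H.filter (fun e => ∀ A ∈ F, ∀ i c, e c ≠ A i c) with hH'
  obtain ⟨M, hMm, hMmax⟩ := Finset.exists_max_image
    (H'.powerset.filter (fun M => ∀ e ∈ M, ∀ f ∈ M, e ≠ f → ∀ i, e i ≠ f i)) Finset.card
    ⟨∅, by simp⟩
  simp only [mem_filter, mem_powerset] at hMm hMmax
  obtain ⟨hMH', hM⟩ := hMm
  have hMF : ∀ e ∈ M, ∀ A ∈ F, ∀ i c, e c ≠ A i c := fun e he => (mem_filter.1 (hMH' he)).2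
  have hlc := leftover_card F M hF1 hF2 hM hMF
  refine final_absorb H F M (hMH'.trans (filter_subset _ _)) hF1 hFa hM hMF ?_
  intro t
  refine le_trans ?_ (hFl t)
  by_contra hbig
  push Not at hbig
  obtain ⟨M', hM'H, hM', hlt⟩ := aug hR hRn H' M hMH' hM
    (fun c => univ.filter (fun z : Fin n => (∀ e ∈ M, e c ≠ z) ∧ ∀ A ∈ F, ∀ i, A i c ≠ z))
    (by
      intro c z hz e he
      simp only [mem_filter, mem_univ, true_and] at hz
      exact hz.1 e he)
    (by
      intro c
      have := hlc c
      omega)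
    (by
      intro c z hz
      simp only [mem_filter, mem_univ, true_and] at hz
      have h2 := deg_rest H F c z hz.2
      have h3 := hdeg c z
      have h4 : 9 * (F.card : ℝ) * n ≤ γ / 2 * (n:ℝ)^2 := by
        rw [hFc]
        have h5 : 9 * (k:ℝ) ≤ γ / 2 * n := by
          have : 0 < γ * n := by positivity
          linarith
        have := mul_le_mul_of_nonneg_right h5 hnpos.le
        linarith
      have h5 : (15:ℝ) / R * (n:ℝ)^2 ≤ γ / 2 * (n:ℝ)^2 :=
        mul_le_mul_of_nonneg_right hR15 (by positivity)
      linarith)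
  have := hMmax M' ⟨hM'H, hM'⟩
  omega

end PMProof

/-- There is a constant `c > 0` such that for all `γ > 0`, every 3-partite 3-graph with
`n > c·γ⁻¹²` vertices in each class and minimum vertex degree at least `(5/9 + γ)·n²`
contains a perfect matching. -/
theorem asymptotic_perfect_matching :
    ∃ c : ℝ, 0 < c ∧ ∀ γ : ℝ, 0 < γ → ∀ n : ℕ, c / γ ^ 12 < n →
      ∀ H : Finset (Fin 3 → Fin n),
        (∀ (i : Fin 3) (x : Fin n), (5 / 9 + γ) * n ^ 2 ≤ (deg3 H i x : ℝ)) →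
        ∃ M : Finset (Fin 3 → Fin n), M ⊆ H ∧
          (∀ e ∈ M, ∀ f ∈ M, e ≠ f → ∀ i, e i ≠ f i) ∧ M.card = n := by
  refine ⟨(10:ℝ) ^ 22, by positivity, fun γ h0 n hn H hdeg => ?_⟩
  exact PMProof.main_lemma h0 hn H hdeg
end
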